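/- arXiv:2112.05426 — 3 statements merged into one kernel-verified Lean document; each statement's English description precedes it below -/
import Mathlib

section
/- For every real α > 1 there exists a constant c_α > 1 (one may take the same constant as in the circle case, c_α := min( 1 + 2^{α−4} − 1/8, 1 + (2^{α−1}−1)/(3·2^α+2), 1 + min(2^α−1, (3^α−2^α−1)/2, (4^α−2^α−2)/3)/(4(2^α+1)) )) and an N such that for every n ≥ N there exist a set P of 2n+2 points in the Euclidean plane ℝ² containing a source s, and a point q ∈ ℝ² ∖ P, with the following property: for every feasible range assignment ρ for P with cost_α(ρ) ≤ c_α·opt_α(P) and every feasible range assignment ρ' for P ∪ {q} with cost_α(ρ') ≤ c_α·opt_α(P∪{q}), the number of points p ∈ P ∪ {q} with ρ(p) ≠ ρ'(p) is greater than 2n/3 − 1, where ρ is extended by ρ(q) = 0. (Hence the dynamic broadcast range-assignment problem in ℝ² admits no stable approximation scheme.) -/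
open Finset

attribute [local instance] Classical.propDecidable

/-- A range assignment `ρ` for a finite point set `P` with source `s` is *feasible* if it is
nonnegative on `P` and every point of `P` is reachable from `s` via a sequence of points of `P`
in which each step is within the range of its starting point. -/
def Feasible {X : Type*} [MetricSpace X] (P : Finset X) (s : X) (ρ : X → ℝ) : Prop :=
  (∀ p ∈ P, 0 ≤ ρ p) ∧
  ∀ p ∈ P, ∃ (m : ℕ) (f : ℕ → X), f 0 = s ∧ f m = p ∧ (∀ i ≤ m, f i ∈ P) ∧
    ∀ i < m, dist (f i) (f (i + 1)) ≤ ρ (f i)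

/-- The cost `∑_{p ∈ P} ρ(p)^α` of a range assignment. -/
noncomputable def cost {X : Type*} (α : ℝ) (P : Finset X) (ρ : X → ℝ) : ℝ :=
  ∑ p ∈ P, ρ p ^ α

/-- The optimal broadcast cost: the infimum of `cost α P ρ` over feasible `ρ`. -/
noncomputable def opt {X : Type*} [MetricSpace X] (α : ℝ) (P : Finset X) (s : X) : ℝ :=
  sInf {c : ℝ | ∃ ρ : X → ℝ, Feasible P s ρ ∧ cost α P ρ = c}

/-- The constant `c_α` from the no-SAS proof (same as in the circle case). -/
noncomputable def cAlpha (α : ℝ) : ℝ :=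
  min (1 + 2 ^ (α - 4) - 1 / 8)
    (min (1 + (2 ^ (α - 1) - 1) / (3 * 2 ^ α + 2))
      (1 + min (2 ^ α - 1) (min ((3 ^ α - 2 ^ α - 1) / 2) ((4 ^ α - 2 ^ α - 2) / 3)) /
        (4 * (2 ^ α + 1))))

/-!
Take a loop consisting of the source `s`, a chain of `2 * n + 1` points with steps `1, 2, 1, 2, …`,
and a point `q` still to be inserted, halfway between the end of the chain and `s`. Without `q` the
cheapest broadcast jumps from `s` to the start of the chain and runs through it forwards; with `q`
it goes through `q` and runs backwards. Entering the chain costs about as much as running through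
it, and the distances are balanced so that no near-optimal assignment can enter it in another way.

To compare ranges with the chain, price the gaps of length `1` at `1` and those of length `2` at
`2 ^ α + M` with a small surcharge `M > 0`. In a forward broadcast, the gaps covered from a point
are worth at most `r ^ α`, where `r` is its range, plus `M` if the next gap is long. The estimate
leaves `M` to spare unless the range is long (`2 ≤ r`) exactly when the next gap is, so this holds
up to few exceptions if the assignment is near-optimal. In a backward broadcast it is the other way
round, hence most ranges change on the insertion.

In the plane, the chain runs along three sides of a long rectangle whose fourth side, of length
`o(n)`, contains `s` and `q`. The opposite side and the parts of the chain near `s` and `q` have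
length `o(n)` too; they are contracted and contribute nothing to the count.
-/

section RangeAssignment

variable {X : Type*}

namespace Feasible

variable [MetricSpace X] {P : Finset X} {s : X} {ρ : X → ℝ}

lemma exists_edge_leaving (h : Feasible P s ρ) {C : Set X} (hsC : s ∈ C) {z : X} (hzP : z ∈ P)
    (hzC : z ∉ C) : ∃ u ∈ P, ∃ v ∈ P, u ∈ C ∧ v ∉ C ∧ dist u v ≤ ρ u := by
  obtain ⟨m, f, hf0, hfm, hfP, hstep⟩ := h.2 z hzP
  by_contra! hclosed
  have hmem : ∀ i ≤ m, f i ∈ C := by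
    intro i
    induction i with
    | zero => exact fun _ => hf0 ▸ hsC
    | succ i ih =>
      intro hi
      by_contra hout
      exact (hstep i hi).not_gt
        (hclosed _ (hfP i (by lia)) _ (hfP (i + 1) hi) (ih (by lia)) hout)
  exact hzC (hfm ▸ hmem m le_rfl)

lemma exists_chain_edge_into (h : Feasible P s ρ) {N : ℕ} {p : ℕ → X} (hp : ∀ k ≤ N, p k ∈ P)
    (hps : ∀ k ≤ N, p k ≠ s) {K : Set ℕ}
    (hoff : ∀ z ∈ P, (∀ k ≤ N, p k ≠ z) → ∀ k ≤ N, k ∈ K → ρ z < dist z (p k))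
    {k₀ : ℕ} (hk₀ : k₀ ≤ N) (hk₀K : k₀ ∈ K) :
    ∃ u ≤ N, ∃ v ≤ N, u ∉ K ∧ v ∈ K ∧ dist (p u) (p v) ≤ ρ (p u) := by
  obtain ⟨x, hxP, y, -, hxC, hyC, hxy⟩ :=
    h.exists_edge_leaving (C := {x | ∀ k ≤ N, k ∈ K → p k ≠ x}) (fun k hk _ => hps k hk)
      (hp k₀ hk₀) (fun hout => hout k₀ hk₀ hk₀K rfl)
  simp only [Set.mem_ofPred_eq, not_forall, not_not] at hxC hyC
  obtain ⟨v, hv, hvK, rfl⟩ := hyC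
  by_cases hx : ∀ k ≤ N, p k ≠ x
  · exact absurd hxy (hoff x hxP hx v hv hvK).not_ge
  · push Not at hx
    obtain ⟨u, hu, rfl⟩ := hx
    exact ⟨u, hu, v, hv, fun huK => hxC u hu huK rfl, hvK, hxy⟩

lemma rpow_le_cost (h : Feasible P s ρ) (α : ℝ) {z : X} (hz : z ∈ P) : ρ z ^ α ≤ cost α P ρ :=
  single_le_sum (fun x hx => Real.rpow_nonneg (h.1 x hx) α) hz

lemma lt_of_cost_lt (h : Feasible P s ρ) {α : ℝ} (hα : 0 < α) {r : ℝ} (hr : 0 ≤ r)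
    (hcost : cost α P ρ < r ^ α) {z : X} (hz : z ∈ P) : ρ z < r :=
  (Real.rpow_lt_rpow_iff (h.1 z hz) hr hα).1 ((h.rpow_le_cost α hz).trans_lt hcost)

lemma opt_le_cost (h : Feasible P s ρ) (α : ℝ) : opt α P s ≤ cost α P ρ := by
  refine csInf_le ⟨0, ?_⟩ ⟨ρ, h, rfl⟩
  rintro _ ⟨σ, hσ, rfl⟩
  exact sum_nonneg fun x hx => Real.rpow_nonneg (hσ.1 x hx) α

end Feasible

/-- The bound comes from the assignment in which every point of the path just reaches the next. -/
lemma opt_image_range_le [MetricSpace X] [DecidableEq X] {α : ℝ} (hα : α ≠ 0) {m : ℕ} {f : ℕ → X}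
    (hf : Set.InjOn f (Set.Iic m)) :
    opt α ((range (m + 1)).image f) (f 0) ≤ ∑ i ∈ range m, dist (f i) (f (i + 1)) ^ α := by
  let g := Function.invFunOn f (Set.Iic m)
  let ρ : X → ℝ := fun x => if g x < m then dist x (f (g x + 1)) else 0
  have hg : ∀ i ≤ m, g (f i) = i := fun i hi => hf.leftInvOn_invFunOn hi
  have hstep : ∀ i < m, ρ (f i) = dist (f i) (f (i + 1)) := fun i hi => by
    simp only [ρ, hg i hi.le, if_pos hi]
  have hlast : ρ (f m) = 0 := by simp only [ρ, hg m le_rfl, lt_irrefl, if_false]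
  have hfeas : Feasible ((range (m + 1)).image f) (f 0) ρ := by
    refine ⟨fun x _ => by simp only [ρ]; split_ifs <;> positivity, fun x hx => ?_⟩
    obtain ⟨k, hk, rfl⟩ := mem_image.1 hx
    have hkm : k ≤ m := mem_range_succ_iff.1 hk
    exact ⟨k, f, rfl, rfl,
      fun i hi => mem_image_of_mem f (mem_range_succ_iff.2 (hi.trans hkm)),
      fun i hi => (hstep i (hi.trans_le hkm)).ge⟩
  calc opt α ((range (m + 1)).image f) (f 0)
      ≤ ∑ x ∈ (range (m + 1)).image f, ρ x ^ α := hfeas.opt_le_cost α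
    _ = ∑ i ∈ range (m + 1), ρ (f i) ^ α :=
        sum_image fun i hi j hj => hf (mem_range_succ_iff.1 hi)
          (mem_range_succ_iff.1 hj)
    _ = ∑ i ∈ range m, dist (f i) (f (i + 1)) ^ α := by
        rw [sum_range_succ, hlast, Real.zero_rpow hα, add_zero]
        exact sum_congr rfl fun i hi => by rw [hstep i (mem_range.1 hi)]

end RangeAssignment

section Price

lemma nat_mul_rpow_add_rpow_le {α a t : ℝ} (hα : 1 ≤ α) (ha : 0 ≤ a) (ht : 0 ≤ t) (k : ℕ) :
    k * a ^ α + t ^ α ≤ (k * a + t) ^ α := by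
  induction k with
  | zero => simp
  | succ k ih =>
    calc ((k + 1 : ℕ) : ℝ) * a ^ α + t ^ α = a ^ α + (k * a ^ α + t ^ α) := by push_cast; ring
      _ ≤ a ^ α + (k * a + t) ^ α := by gcongr
      _ ≤ (a + (k * a + t)) ^ α := Real.add_rpow_le_rpow_add ha (by positivity) hα
      _ = (((k + 1 : ℕ) : ℝ) * a + t) ^ α := by push_cast; ring_nf

/-- `M` is an admissible surcharge on the gaps of length `2`: if these are priced at `2 ^ α + M`
and the gaps of length `1` at `1`, alternating, then the gaps covered by a range `r` are worth at
most `r ^ α`, or at most `r ^ α + M` when both the first and the last of them are long. -/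
structure IsSurcharge (α M : ℝ) : Prop where
  nonneg : 0 ≤ M
  le_two_rpow : M ≤ 2 ^ α - 1
  two_mul_le : 2 * M ≤ 3 ^ α - 2 ^ α - 1

lemma two_rpow_add_one_le_three_rpow {α : ℝ} (hα : 1 ≤ α) : (2 : ℝ) ^ α + 1 ≤ 3 ^ α := by
  have := Real.add_rpow_le_rpow_add (a := 2) (b := 1) zero_le_two zero_le_one hα
  norm_num at this
  exact this

lemma isSurcharge_zero {α : ℝ} (hα : 1 ≤ α) : IsSurcharge α 0 where
  nonneg := le_rfl
  le_two_rpow := sub_nonneg.2 (Real.one_le_rpow one_le_two (by linarith))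
  two_mul_le := by linarith [two_rpow_add_one_le_three_rpow hα]

/-- The total price of the line from `0` to `x`, where each `[3k, 3k + 1]` is a gap of price `1`
and each `[3k + 1, 3k + 3]` a gap of price `2 ^ α + M`. Only meaningful when `x % 3 ≤ 1`, that is,
at the end of a gap. -/
noncomputable def price (α M : ℝ) (x : ℕ) : ℝ :=
  (1 + 2 ^ α + M) * (x / 3 : ℕ) + (x % 3 : ℕ)

variable {α M : ℝ} {x y : ℕ}

lemma price_add_three_mul (α M : ℝ) (x k : ℕ) :
    price α M (x + 3 * k) = price α M x + k * (1 + 2 ^ α + M) := by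
  rw [price, price, Nat.add_mul_mod_self_left, Nat.add_mul_div_left x k three_pos]
  push_cast
  ring

lemma price_add_one (α M : ℝ) (hx : x % 3 = 0) : price α M (x + 1) = price α M x + 1 := by
  rw [price, price, hx, show (x + 1) / 3 = x / 3 by lia, show (x + 1) % 3 = 1 by lia]
  push_cast
  ring

lemma price_add_two (α M : ℝ) (hx : x % 3 = 1) :
    price α M (x + 2) = price α M x + (2 ^ α + M) := by
  rw [price, price, hx, show (x + 2) / 3 = x / 3 + 1 by lia, show (x + 2) % 3 = 0 by lia]
  push_cast
  ring

lemma exists_eq_add_three_mul (hxy : x ≤ y) (hx : x % 3 ≤ 1) (hy : y % 3 ≤ 1) :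
    ∃ k, y = x + 3 * k ∨ x % 3 = 0 ∧ y = x + 1 + 3 * k ∨ x % 3 = 1 ∧ y = x + 2 + 3 * k :=
  ⟨(y - x) / 3, by lia⟩

lemma IsSurcharge.price_le_price (hM : IsSurcharge α M) (hxy : x ≤ y) (hx : x % 3 ≤ 1)
    (hy : y % 3 ≤ 1) : price α M x ≤ price α M y := by
  have hM₀ := hM.nonneg
  obtain ⟨k, rfl | ⟨hx0, rfl⟩ | ⟨hx1, rfl⟩⟩ := exists_eq_add_three_mul hxy hx hy
  · rw [price_add_three_mul, le_add_iff_nonneg_right]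
    positivity
  · rw [price_add_three_mul, price_add_one α M hx0, add_assoc, le_add_iff_nonneg_right]
    positivity
  · rw [price_add_three_mul, price_add_two α M hx1, add_assoc, le_add_iff_nonneg_right]
    positivity

variable {r : ℝ}

lemma IsSurcharge.nat_mul_add_rpow_add_le (hM : IsSurcharge α M) (hα : 1 ≤ α) {k : ℕ} {t : ℝ}
    (ht₀ : 0 ≤ t) (ht₁ : t ≤ 1) (hr : k * 3 + t ≤ r) :
    k * (1 + 2 ^ α + M) + t ^ α + (if 2 ≤ r then M else 0) ≤ r ^ α := by
  obtain ⟨hM₀, hM₁, hM₂⟩ := hM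
  rcases k.eq_zero_or_pos with rfl | hk
  · rw [Nat.cast_zero, zero_mul, zero_add] at hr ⊢
    split_ifs with h2r
    · have htα : t ^ α ≤ 1 := Real.rpow_le_one ht₀ ht₁ (by linarith)
      have h2rα : (2 : ℝ) ^ α ≤ r ^ α := by gcongr
      linarith
    · rw [add_zero]
      gcongr
  · have hk₁ : (1 : ℝ) ≤ k := by exact_mod_cast hk
    have hsplit : k * 3 ^ α + t ^ α ≤ r ^ α :=
      (nat_mul_rpow_add_rpow_le hα zero_le_three ht₀ k).trans (by gcongr)
    have hsurcharge : (if 2 ≤ r then M else 0) ≤ M := by split_ifs <;> linarith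
    nlinarith

lemma IsSurcharge.price_sub_price_add_le (hM : IsSurcharge α M) (hα : 1 ≤ α) (hxy : x ≤ y)
    (hmod : x % 3 ≤ y % 3) (hy : y % 3 ≤ 1) (hr : (y : ℝ) ≤ x + r) :
    price α M y - price α M x + (if 2 ≤ r then M else 0) ≤ r ^ α := by
  obtain ⟨k, rfl | ⟨hx0, rfl⟩ | ⟨hx1, rfl⟩⟩ :=
    exists_eq_add_three_mul hxy (hmod.trans hy) hy
  · have := hM.nat_mul_add_rpow_add_le hα (k := k) le_rfl zero_le_one
      (by push_cast at hr; linarith)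
    rw [Real.zero_rpow (by linarith)] at this
    rw [price_add_three_mul]
    linarith
  · have := hM.nat_mul_add_rpow_add_le hα (k := k) zero_le_one le_rfl
      (by push_cast at hr; linarith)
    rw [Real.one_rpow] at this
    rw [price_add_three_mul, price_add_one α M hx0]
    linarith
  · lia

lemma IsSurcharge.price_sub_price_le (hM : IsSurcharge α M) (hα : 1 ≤ α) (hxy : x ≤ y)
    (hx : x % 3 ≤ 1) (hy : y % 3 ≤ 1) (hr : (y : ℝ) ≤ x + r) :
    price α M y - price α M x ≤ r ^ α + (if 2 ≤ r then M else 0) := by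
  have hM₀ := hM.nonneg
  by_cases hmod : x % 3 ≤ y % 3
  · have := hM.price_sub_price_add_le hα hxy hmod hy hr
    split_ifs at this ⊢ <;> linarith
  · obtain ⟨k, rfl | ⟨hx0, rfl⟩ | ⟨hx1, rfl⟩⟩ := exists_eq_add_three_mul hxy hx hy
    · lia
    · lia
    · have hkr : (k : ℝ) * 3 + 2 ≤ r := by push_cast at hr; linarith
      have hk₀ : (0 : ℝ) ≤ k := k.cast_nonneg
      have hsplit : (k : ℝ) * 3 ^ α + 2 ^ α ≤ r ^ α :=
        (nat_mul_rpow_add_rpow_le hα zero_le_three zero_le_two k).trans (by gcongr)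
      have hperiod : k * (1 + 2 ^ α + M) ≤ k * (3 : ℝ) ^ α :=
        mul_le_mul_of_nonneg_left (by linarith [hM.two_mul_le]) hk₀
      rw [price_add_three_mul, price_add_two α M hx1, if_pos (by linarith)]
      linarith

lemma abs_price_sub_price_le (hα : 1 ≤ α) (hx : x % 3 ≤ 1) (hy : y % 3 ≤ 1)
    (hr : |(x : ℝ) - y| ≤ r) : |price α 0 x - price α 0 y| ≤ r ^ α := by
  wlog hxy : x ≤ y generalizing x y
  · rw [abs_sub_comm] at hr ⊢
    exact this hy hx hr (le_of_not_ge hxy)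
  have hM := isSurcharge_zero hα
  have := hM.price_sub_price_le hα hxy hx hy (r := r) (by linarith [neg_le_of_abs_le hr])
  rw [ite_self, add_zero] at this
  rwa [abs_sub_comm, abs_of_nonneg (sub_nonneg.2 (hM.price_le_price hxy hx hy))]

lemma IsSurcharge.price_sub_price_add_le_right (hM : IsSurcharge α M) (hα : 1 ≤ α) (hxy : x ≤ y)
    (hx : x % 3 ≤ 1) (hy : y % 3 ≤ 1) (hr : (y : ℝ) ≤ x + r) :
    price α M y - price α M x + (if x % 3 = 0 ↔ 2 ≤ r then M else 0)
      ≤ r ^ α + (if x % 3 = 1 then M else 0) := by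
  rcases Nat.le_one_iff_eq_zero_or_eq_one.1 hx with h | h
  · have := hM.price_sub_price_add_le hα hxy (by lia) hy hr
    simpa only [h, true_iff, zero_ne_one, if_false, add_zero] using this
  · have := hM.price_sub_price_le hα hxy hx hy hr
    simp only [h, one_ne_zero, false_iff, if_true]
    split_ifs at this ⊢ <;> first | contradiction | linarith

lemma IsSurcharge.price_sub_price_add_le_left (hM : IsSurcharge α M) (hα : 1 ≤ α) (hxy : x ≤ y)
    (hx : x % 3 ≤ 1) (hy : y % 3 ≤ 1) (hr : (y : ℝ) ≤ x + r) :
    price α M y - price α M x + (if y % 3 = 1 ↔ 2 ≤ r then M else 0)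
      ≤ r ^ α + (if y % 3 = 0 then M else 0) := by
  rcases Nat.le_one_iff_eq_zero_or_eq_one.1 hy with h | h
  · have := hM.price_sub_price_le hα hxy hx hy hr
    simp only [h, zero_ne_one, false_iff, if_true]
    split_ifs at this ⊢ <;> first | contradiction | linarith
  · have := hM.price_sub_price_add_le hα hxy (by lia) hy hr
    simpa only [h, true_iff, one_ne_zero, if_false, add_zero] using this

end Price

section Covering

lemma sum_increments_le_of_cover {ι : Type*} {Φ : ℕ → ℝ} (hΦ : Monotone Φ) {V : Finset ℕ}
    {I : Finset ι} {lo hi : ι → ℕ} (hle : ∀ i ∈ I, lo i ≤ hi i)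
    (hcover : ∀ j ∈ V, ∃ i ∈ I, j ∈ Ico (lo i) (hi i)) :
    ∑ j ∈ V, (Φ (j + 1) - Φ j) ≤ ∑ i ∈ I, (Φ (hi i) - Φ (lo i)) := by
  have hinc : ∀ j, 0 ≤ Φ (j + 1) - Φ j := fun j => sub_nonneg.2 (hΦ j.le_succ)
  calc ∑ j ∈ V, (Φ (j + 1) - Φ j)
      ≤ ∑ j ∈ V, ∑ i ∈ I with j ∈ Ico (lo i) (hi i), (Φ (j + 1) - Φ j) := by
        refine sum_le_sum fun j hj => ?_
        obtain ⟨i, hi, hji⟩ := hcover j hj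
        exact single_le_sum (f := fun _ => Φ (j + 1) - Φ j) (fun _ _ => hinc j)
          (mem_filter.2 ⟨hi, hji⟩)
    _ = ∑ i ∈ I, ∑ j ∈ V with j ∈ Ico (lo i) (hi i), (Φ (j + 1) - Φ j) :=
        sum_comm' fun j i => by simp only [mem_filter]; tauto
    _ ≤ ∑ i ∈ I, ∑ j ∈ Ico (lo i) (hi i), (Φ (j + 1) - Φ j) :=
        sum_le_sum fun i _ => sum_le_sum_of_subset_of_nonneg
          (fun j hj => (mem_filter.1 hj).2) fun j _ _ => hinc j
    _ = ∑ i ∈ I, (Φ (hi i) - Φ (lo i)) :=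
        sum_congr rfl fun i hi => sum_Ico_sub Φ (hle i hi)

/-- The points `0, …, N` sit at the positions `pos` on a line whose gaps have lengths alternating
between `1` and `2`, as in `price`, with `3 * L` as the distance between the outermost positions;
consecutive points may share a position. -/
structure IsAlternating (N L : ℕ) (pos : ℕ → ℕ) : Prop where
  monotone : Monotone pos
  mod_three_le : ∀ k, pos k % 3 ≤ 1
  succ_le : ∀ k, pos (k + 1) ≤ pos k + 2
  last : pos N = pos 0 + 3 * L

/-- The reach relation `R` on the points `0, …, N` is realized by ranges `r` at positions `pos`. -/
structure IsReach (N : ℕ) (pos : ℕ → ℕ) (R : ℕ → ℕ → Prop) (r : ℕ → ℝ) : Prop where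
  refl : ∀ u ≤ N, R u u
  abs_sub_le : ∀ u ≤ N, ∀ v ≤ N, R u v → |(pos u : ℝ) - pos v| ≤ r u

/-- Some point at or before the gap between `j` and `j + 1` reaches a point after it. -/
def CrossesRight (N : ℕ) (R : ℕ → ℕ → Prop) (j : ℕ) : Prop :=
  ∃ u v, u ≤ j ∧ j < v ∧ v ≤ N ∧ R u v

/-- Some point after the gap between `j` and `j + 1` reaches a point at or before it. -/
def CrossesLeft (N : ℕ) (R : ℕ → ℕ → Prop) (j : ℕ) : Prop :=
  ∃ u v, v ≤ j ∧ j < u ∧ u ≤ N ∧ R u v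

/-- The gaps of nonzero length, indexed by their left ends. -/
noncomputable def liveGaps (N : ℕ) (pos : ℕ → ℕ) : Finset ℕ :=
  {j ∈ range N | pos j < pos (j + 1)}

variable {N L : ℕ} {pos : ℕ → ℕ} {R : ℕ → ℕ → Prop} {r : ℕ → ℝ} {α M : ℝ}

namespace IsReach

lemma exists_farthest_right (hR : IsReach N pos R r) {u : ℕ} (hu : u ≤ N) :
    ∃ v ≤ N, u ≤ v ∧ R u v ∧ ∀ w ≤ N, R u w → w ≤ v := by
  have hmem : ∀ w, w ∈ {w ∈ Iic N | R u w} ↔ w ≤ N ∧ R u w := fun w => by simp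
  obtain ⟨v, hv, hmax⟩ := exists_max_image {w ∈ Iic N | R u w} id
    ⟨u, (hmem u).2 ⟨hu, hR.refl u hu⟩⟩
  obtain ⟨hvN, huv⟩ := (hmem v).1 hv
  have hmax' : ∀ w ≤ N, R u w → w ≤ v := fun w hw huw => hmax w ((hmem w).2 ⟨hw, huw⟩)
  exact ⟨v, hvN, hmax' u hu (hR.refl u hu), huv, hmax'⟩

lemma exists_farthest_left (hR : IsReach N pos R r) {u : ℕ} (hu : u ≤ N) :
    ∃ v ≤ u, R u v ∧ ∀ w ≤ N, R u w → v ≤ w := by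
  have hmem : ∀ w, w ∈ {w ∈ Iic N | R u w} ↔ w ≤ N ∧ R u w := fun w => by simp
  obtain ⟨v, hv, hmin⟩ := exists_min_image {w ∈ Iic N | R u w} id
    ⟨u, (hmem u).2 ⟨hu, hR.refl u hu⟩⟩
  have hmin' : ∀ w ≤ N, R u w → v ≤ w := fun w hw huw => hmin w ((hmem w).2 ⟨hw, huw⟩)
  exact ⟨v, hmin' u hu (hR.refl u hu), ((hmem v).1 hv).2, hmin'⟩

end IsReach

namespace IsAlternating

lemma monotone_price (h : IsAlternating N L pos) (hM : IsSurcharge α M) :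
    Monotone fun k => price α M (pos k) := fun _ _ hij =>
  hM.price_le_price (h.monotone hij) (h.mod_three_le _) (h.mod_three_le _)

lemma sum_liveGaps (h : IsAlternating N L pos) (α M : ℝ) :
    ∑ j ∈ liveGaps N pos, (price α M (pos (j + 1)) - price α M (pos j))
      = L * (1 + 2 ^ α + M) := by
  have hdead : ∀ j ∈ range N, price α M (pos (j + 1)) - price α M (pos j) ≠ 0 →
      pos j < pos (j + 1) := fun j _ hne =>
    (h.monotone j.le_succ).lt_of_ne fun heq => hne (by rw [heq, sub_self])
  rw [liveGaps, sum_filter_of_ne hdead, sum_range_sub fun k => price α M (pos k), h.last,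
    price_add_three_mul, add_sub_cancel_left]

theorem price_add_abnormal_le_of_crossesRight (h : IsAlternating N L pos) (hα : 1 ≤ α)
    (hM : IsSurcharge α M) (hR : IsReach N pos R r)
    (hcross : ∀ j ∈ liveGaps N pos, CrossesRight N R j) :
    L * (1 + 2 ^ α + M) + M * #{u ∈ range (N + 1) | pos u % 3 = 0 ↔ 2 ≤ r u}
      ≤ ∑ u ∈ range (N + 1), r u ^ α + M * #{u ∈ range (N + 1) | pos u % 3 = 1} := by
  choose! far hfarN hfar hRfar hmax using fun u => hR.exists_farthest_right (u := u)
  have hlt : ∀ u ∈ range (N + 1), u ≤ N := fun u hu => mem_range_succ_iff.1 hu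
  have hcover : L * (1 + 2 ^ α + M)
      ≤ ∑ u ∈ range (N + 1), (price α M (pos (far u)) - price α M (pos u)) := by
    rw [← h.sum_liveGaps]
    refine sum_increments_le_of_cover (h.monotone_price hM) (lo := id)
      (fun u hu => hfar u (hlt u hu)) fun j hj => ?_
    obtain ⟨u, v, huj, hjv, hvN, huv⟩ := hcross j hj
    exact ⟨u, mem_range.2 (by lia), mem_Ico.2 ⟨huj, hjv.trans_le (hmax u (by lia) v hvN huv)⟩⟩
  have hvertex : ∀ u ∈ range (N + 1), price α M (pos (far u)) - price α M (pos u)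
      + (if pos u % 3 = 0 ↔ 2 ≤ r u then M else 0) ≤ r u ^ α + (if pos u % 3 = 1 then M else 0) :=
    fun u hu => by
      have hreach := hR.abs_sub_le u (hlt u hu) _ (hfarN u (hlt u hu)) (hRfar u (hlt u hu))
      exact hM.price_sub_price_add_le_right hα (h.monotone (hfar u (hlt u hu)))
        (h.mod_three_le _) (h.mod_three_le _) (by linarith [neg_le_of_abs_le hreach])
  have hsum := sum_le_sum hvertex
  simp only [sum_add_distrib, ← sum_filter, sum_const, nsmul_eq_mul] at hsum
  linarith

theorem price_add_abnormal_le_of_crossesLeft (h : IsAlternating N L pos) (hα : 1 ≤ α)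
    (hM : IsSurcharge α M) (hR : IsReach N pos R r)
    (hcross : ∀ j ∈ liveGaps N pos, CrossesLeft N R j) :
    L * (1 + 2 ^ α + M) + M * #{u ∈ range (N + 1) | pos u % 3 = 1 ↔ 2 ≤ r u}
      ≤ ∑ u ∈ range (N + 1), r u ^ α + M * #{u ∈ range (N + 1) | pos u % 3 = 0} := by
  choose! far hfar hRfar hmin using fun u => hR.exists_farthest_left (u := u)
  have hlt : ∀ u ∈ range (N + 1), u ≤ N := fun u hu => mem_range_succ_iff.1 hu
  have hcover : L * (1 + 2 ^ α + M)
      ≤ ∑ u ∈ range (N + 1), (price α M (pos u) - price α M (pos (far u))) := by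
    rw [← h.sum_liveGaps]
    refine sum_increments_le_of_cover (h.monotone_price hM) (hi := id)
      (fun u hu => hfar u (hlt u hu)) fun j hj => ?_
    obtain ⟨u, v, hvj, hju, huN, huv⟩ := hcross j hj
    exact ⟨u, mem_range.2 (by lia), mem_Ico.2 ⟨(hmin u huN v (by lia) huv).trans hvj, hju⟩⟩
  have hvertex : ∀ u ∈ range (N + 1), price α M (pos u) - price α M (pos (far u))
      + (if pos u % 3 = 1 ↔ 2 ≤ r u then M else 0) ≤ r u ^ α + (if pos u % 3 = 0 then M else 0) :=
    fun u hu => by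
      have huN := hlt u hu
      have hreach := hR.abs_sub_le u huN _ ((hfar u huN).trans huN) (hRfar u huN)
      exact hM.price_sub_price_add_le_left hα (h.monotone (hfar u huN))
        (h.mod_three_le _) (h.mod_three_le _) (by linarith [le_of_abs_le hreach])
  have hsum := sum_le_sum hvertex
  simp only [sum_add_distrib, ← sum_filter, sum_const, nsmul_eq_mul] at hsum
  linarith

lemma card_mod_three (h : IsAlternating N L pos) :
    #{u ∈ range (N + 1) | pos u % 3 = 0} + #{u ∈ range (N + 1) | pos u % 3 = 1} = N + 1 := by
  have hone : ∀ u ∈ range (N + 1), pos u % 3 = 1 ↔ ¬pos u % 3 = 0 := fun u _ => by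
    have := h.mod_three_le u
    lia
  rw [filter_congr hone, card_filter_add_card_filter_not, card_range]

lemma abs_price_sub_price_le_of_reach (h : IsAlternating N L pos) (hα : 1 ≤ α)
    (hR : IsReach N pos R r) {u v : ℕ} (hu : u ≤ N) (hv : v ≤ N) (huv : R u v) :
    |price α 0 (pos u) - price α 0 (pos v)| ≤ r u ^ α :=
  abs_price_sub_price_le hα (h.mod_three_le u) (h.mod_three_le v) (hR.abs_sub_le u hu v hv huv)

/-- The live gaps before `k` are charged to ranges used rightwards by points up to `k`, those after
`k` to ranges used leftwards by points beyond `k`, so that no point is charged twice. -/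
lemma sum_liveGaps_erase_le (h : IsAlternating N L pos) (hα : 1 ≤ α) (hR : IsReach N pos R r)
    {k : ℕ} (hright : ∀ j ∈ liveGaps N pos, j < k → CrossesRight N R j)
    (hleft : ∀ j ∈ liveGaps N pos, k < j → CrossesLeft N R j) :
    ∑ j ∈ (liveGaps N pos).erase k, (price α 0 (pos (j + 1)) - price α 0 (pos j))
      ≤ ∑ u ∈ range (N + 1), r u ^ α := by
  choose! farR hfarRN hfarR hRfarR hmax using fun u => hR.exists_farthest_right (u := u)
  choose! farL hfarL hRfarL hmin using fun u => hR.exists_farthest_left (u := u)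
  have hlt : ∀ u ∈ range (N + 1), u ≤ N := fun u hu => mem_range_succ_iff.1 hu
  let lo : ℕ → ℕ := fun u => if u ≤ k then u else farL u
  let hi : ℕ → ℕ := fun u => if u ≤ k then farR u else u
  refine (sum_increments_le_of_cover (h.monotone_price (isSurcharge_zero hα)) (lo := lo)
    (hi := hi) (I := range (N + 1)) (fun u hu => ?_) fun j hj => ?_).trans
    (sum_le_sum fun u hu => ?_)
  · have := hlt u hu
    simp only [lo, hi]
    split_ifs
    exacts [hfarR u this, hfarL u this]
  · obtain ⟨hjk, hjV⟩ := mem_erase.1 hj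
    rcases hjk.lt_or_gt with hlt | hgt
    · obtain ⟨u, v, huj, hjv, hvN, huv⟩ := hright j hjV hlt
      refine ⟨u, mem_range.2 (by lia), ?_⟩
      simp only [lo, hi, if_pos (huj.trans hlt.le), mem_Ico]
      exact ⟨huj, hjv.trans_le (hmax u (by lia) v hvN huv)⟩
    · obtain ⟨u, v, hvj, hju, huN, huv⟩ := hleft j hjV hgt
      refine ⟨u, mem_range.2 (by lia), ?_⟩
      simp only [lo, hi, if_neg (hgt.trans hju).not_ge, mem_Ico]
      exact ⟨(hmin u huN v (by lia) huv).trans hvj, hju⟩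
  · have huN := hlt u hu
    simp only [lo, hi]
    split_ifs
    · have := h.abs_price_sub_price_le_of_reach hα hR huN (hfarRN u huN) (hRfarR u huN)
      linarith [neg_le_of_abs_le this]
    · exact le_of_abs_le
        (h.abs_price_sub_price_le_of_reach hα hR huN ((hfarL u huN).trans huN) (hRfarL u huN))

theorem price_le_of_crosses (h : IsAlternating N L pos) (hα : 1 ≤ α) (hR : IsReach N pos R r)
    (hcross : ∀ i ∈ liveGaps N pos, ∀ j ∈ liveGaps N pos, i < j →
      CrossesRight N R i ∨ CrossesLeft N R j) :
    L * (1 + 2 ^ α) ≤ ∑ u ∈ range (N + 1), r u ^ α + 2 ^ α := by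
  obtain ⟨k, hright, hleft⟩ : ∃ k, (∀ j ∈ liveGaps N pos, j < k → CrossesRight N R j) ∧
      ∀ j ∈ liveGaps N pos, k < j → CrossesLeft N R j := by
    by_cases hall : ∃ k ∈ liveGaps N pos, ¬CrossesRight N R k
    · obtain ⟨hk, hkR⟩ := Nat.find_spec hall
      refine ⟨Nat.find hall, fun j hj hjk => ?_, fun j hj hkj =>
        (hcross _ hk j hj hkj).resolve_left hkR⟩
      by_contra hjR
      exact Nat.find_min hall hjk ⟨hj, hjR⟩
    · push Not at hall
      refine ⟨N, fun j hj _ => hall j hj, fun j hj hNj => ?_⟩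
      exact absurd (mem_range.1 (mem_filter.1 hj).1) hNj.not_gt
  have htotal := h.sum_liveGaps α 0
  have hcover := h.sum_liveGaps_erase_le hα hR hright hleft
  have hgap : price α 0 (pos (k + 1)) - price α 0 (pos k) ≤ 2 ^ α := by
    refine le_of_abs_le (abs_price_sub_price_le hα (h.mod_three_le _) (h.mod_three_le _) ?_)
    have hmono : (pos k : ℝ) ≤ pos (k + 1) := by exact_mod_cast h.monotone k.le_succ
    have hstep : (pos (k + 1) : ℝ) ≤ pos k + 2 := by exact_mod_cast h.succ_le k
    rw [abs_of_nonneg (by linarith)]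
    linarith
  rw [add_zero] at htotal
  by_cases hk : k ∈ liveGaps N pos
  · rw [← sum_erase_add _ _ hk] at htotal
    linarith
  · rw [erase_eq_of_notMem hk] at hcover
    have : (0 : ℝ) ≤ 2 ^ α := by positivity
    linarith

end IsAlternating

end Covering

section Path

variable {X : Type*}

/-- The sequence `x, f 0, f 1, …`. -/
def pathCons (x : X) (f : ℕ → X) : ℕ → X
  | 0 => x
  | k + 1 => f k

lemma injOn_pathCons {x : X} {f : ℕ → X} {m : ℕ} (hf : Set.InjOn f (Set.Iic m))
    (hx : ∀ k ≤ m, f k ≠ x) : Set.InjOn (pathCons x f) (Set.Iic (m + 1)) := by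
  rintro (_ | i) hi (_ | j) hj hij
  · rfl
  · exact absurd hij.symm (hx j (Nat.le_of_succ_le_succ hj))
  · exact absurd hij (hx i (Nat.le_of_succ_le_succ hi))
  · rw [hf (Nat.le_of_succ_le_succ hi) (Nat.le_of_succ_le_succ hj) hij]

lemma image_pathCons_range [DecidableEq X] (x : X) (f : ℕ → X) (m : ℕ) :
    (range (m + 1)).image (pathCons x f) = insert x ((range m).image f) := by
  rw [range_add_one', image_insert, map_eq_image, image_image]
  rfl

lemma sum_dist_pathCons [MetricSpace X] (α : ℝ) (x : X) (f : ℕ → X) (m : ℕ) :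
    ∑ i ∈ range (m + 1), dist (pathCons x f i) (pathCons x f (i + 1)) ^ α
      = ∑ i ∈ range m, dist (f i) (f (i + 1)) ^ α + dist x (f 0) ^ α :=
  sum_range_succ' _ m

lemma injOn_comp_sub {f : ℕ → X} {m : ℕ} (hf : Set.InjOn f (Set.Iic m)) :
    Set.InjOn (fun k => f (m - k)) (Set.Iic m) := fun i hi j hj hij => by
  have := hf (Nat.sub_le m i) (Nat.sub_le m j) hij
  simp only [Set.mem_Iic] at hi hj
  lia

lemma image_comp_sub_range [DecidableEq X] (f : ℕ → X) (m : ℕ) :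
    (range (m + 1)).image (fun k => f (m - k)) = (range (m + 1)).image f := by
  have hreflect : (range (m + 1)).image (fun k => m - k) = range (m + 1) :=
    range_image_pred_top_sub (m + 1)
  nth_rw 2 [← hreflect]
  rw [image_image]
  rfl

lemma sum_dist_comp_sub [MetricSpace X] (α : ℝ) (f : ℕ → X) (m : ℕ) :
    ∑ i ∈ range m, dist (f (m - i)) (f (m - (i + 1))) ^ α
      = ∑ i ∈ range m, dist (f i) (f (i + 1)) ^ α := by
  rw [← sum_range_reflect fun i => dist (f i) (f (i + 1)) ^ α]
  refine sum_congr rfl fun i hi => ?_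
  have hi := mem_range.1 hi
  rw [dist_comm, show m - (i + 1) = m - 1 - i by lia, show m - i = m - 1 - i + 1 by lia]

lemma sum_range_alternating_rpow (α : ℝ) (n : ℕ) :
    ∑ k ∈ range (2 * n), (1 + (k % 2 : ℕ) : ℝ) ^ α = n * (1 + 2 ^ α) := by
  induction n with
  | zero => simp
  | succ n ih =>
    rw [show 2 * (n + 1) = 2 * n + 1 + 1 by ring, sum_range_succ, sum_range_succ, ih,
      show 2 * n % 2 = 0 by lia, show (2 * n + 1) % 2 = 1 by lia, Nat.cast_zero, add_zero,
      Real.one_rpow, Nat.cast_one, one_add_one_eq_two]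
    push_cast
    ring

end Path

section BroadcastLoop

variable {X : Type*}

/-- The instance before the insertion: the source `s` and the chain `p 0, …, p (2 * n)`. -/
def loopPoints [DecidableEq X] (n : ℕ) (s : X) (p : ℕ → X) : Finset X :=
  insert s ((range (2 * n + 1)).image p)

lemma mem_of_loopPoints_subset [DecidableEq X] {n : ℕ} {s : X} {p : ℕ → X} {S : Finset X}
    (hPS : loopPoints n s p ⊆ S) : ∀ k ≤ 2 * n, p k ∈ S := fun _ hk =>
  hPS (mem_insert_of_mem (mem_image_of_mem p (mem_range_succ_iff.2 hk)))

lemma eq_or_eq_of_mem_insert_loopPoints [DecidableEq X] {n : ℕ} {s q : X} {p : ℕ → X}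
    {z : X} (hz : z ∈ insert q (loopPoints n s p)) (hoff : ∀ k ≤ 2 * n, p k ≠ z) :
    z = s ∨ z = q := by
  simp only [loopPoints, mem_insert, mem_image, mem_range] at hz
  rcases hz with rfl | rfl | ⟨k, hk, rfl⟩
  exacts [.inr rfl, .inl rfl, absurd rfl (hoff k (Nat.lt_succ_iff.1 hk))]

variable [MetricSpace X]

/-- A loop `s, p 0, …, p (2 * n), q, s` whose chain has steps `1, 2, 1, 2, …`. Once `s` has paid
`D₁` to reach `p 0`, broadcasting forwards along the chain is cheap; once `s` and `q` have paid
`D₂ / 2` each to reach `p (2 * n)`, so is broadcasting backwards. The positions `pos` contract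
the parts of the chain close to `s` or `q`: the chain beyond a live gap is at distance at least
`D₂` from `s`, the chain before it at distance at least `D₁` from `q`, and the chain between
two live gaps is out of reach of both. -/
structure IsBroadcastLoop (n L : ℕ) (D₁ D₂ : ℝ) (s q : X) (p : ℕ → X) (pos : ℕ → ℕ) :
    Prop where
  alternating : IsAlternating (2 * n) L pos
  D₁_pos : 0 < D₁
  D₁_le_D₂ : D₁ ≤ D₂
  dist_s_first : dist s (p 0) ≤ D₁
  dist_s_q : dist s q = D₂ / 2
  dist_q_last : dist q (p (2 * n)) ≤ D₂ / 2
  dist_succ_le : ∀ k < 2 * n, dist (p k) (p (k + 1)) ≤ 1 + (k % 2 : ℕ)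
  le_dist_s : ∀ k ≤ 2 * n, D₁ ≤ dist s (p k)
  le_dist_q : ∀ k ≤ 2 * n, D₂ / 2 ≤ dist q (p k)
  le_dist_s_of_live : ∀ j ∈ liveGaps (2 * n) pos, ∀ k ≤ 2 * n, j < k → D₂ ≤ dist s (p k)
  le_dist_q_of_live : ∀ j ∈ liveGaps (2 * n) pos, ∀ k ≤ j, D₁ ≤ dist q (p k)
  le_dist_s_of_between : ∀ i ∈ liveGaps (2 * n) pos, ∀ j ∈ liveGaps (2 * n) pos, ∀ k, i < k →
    k ≤ j → D₁ + D₂ ≤ dist s (p k)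
  le_dist_q_of_between : ∀ i ∈ liveGaps (2 * n) pos, ∀ j ∈ liveGaps (2 * n) pos, ∀ k, i < k →
    k ≤ j → D₁ + D₂ ≤ dist q (p k)
  abs_pos_sub_le : ∀ u ≤ 2 * n, ∀ v ≤ 2 * n, dist (p u) (p v) < D₁ + D₂ →
    |(pos u : ℝ) - pos v| ≤ dist (p u) (p v)
  injOn : Set.InjOn p (Set.Iic (2 * n))

namespace IsBroadcastLoop

variable {n L : ℕ} {D₁ D₂ α M : ℝ} {s q : X} {p : ℕ → X} {pos : ℕ → ℕ}
  (h : IsBroadcastLoop n L D₁ D₂ s q p pos)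
include h

lemma D₂_pos : 0 < D₂ := h.D₁_pos.trans_le h.D₁_le_D₂

lemma ne_s {k : ℕ} (hk : k ≤ 2 * n) : p k ≠ s := fun heq => by
  have := h.le_dist_s k hk
  rw [heq, dist_self] at this
  exact this.not_gt h.D₁_pos

lemma ne_q {k : ℕ} (hk : k ≤ 2 * n) : p k ≠ q := fun heq => by
  have := h.le_dist_q k hk
  rw [heq, dist_self] at this
  linarith [h.D₂_pos]

lemma s_ne_q : s ≠ q := dist_pos.1 (by rw [h.dist_s_q]; exact half_pos h.D₂_pos)

lemma injOn_range : Set.InjOn p (range (2 * n + 1)) :=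
  h.injOn.mono fun _ hk => mem_range_succ_iff.1 hk

lemma sum_dist_chain_le (hα : 0 ≤ α) :
    ∑ k ∈ range (2 * n), dist (p k) (p (k + 1)) ^ α ≤ n * (1 + 2 ^ α) := by
  calc ∑ k ∈ range (2 * n), dist (p k) (p (k + 1)) ^ α
      ≤ ∑ k ∈ range (2 * n), (1 + (k % 2 : ℕ) : ℝ) ^ α :=
        sum_le_sum fun k hk =>
          Real.rpow_le_rpow dist_nonneg (h.dist_succ_le k (mem_range.1 hk)) hα
    _ = n * (1 + 2 ^ α) := sum_range_alternating_rpow α n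

variable [DecidableEq X]

lemma s_notMem_chain : s ∉ (range (2 * n + 1)).image p := fun hs => by
  obtain ⟨k, hk, hks⟩ := mem_image.1 hs
  exact h.ne_s (mem_range_succ_iff.1 hk) hks

lemma q_notMem : q ∉ loopPoints n s p := fun hq => by
  rcases mem_insert.1 hq with hqs | hq
  · exact h.s_ne_q hqs.symm
  · obtain ⟨k, hk, hkq⟩ := mem_image.1 hq
    exact h.ne_q (mem_range_succ_iff.1 hk) hkq

lemma card_loopPoints : #(loopPoints n s p) = 2 * n + 2 := by
  rw [loopPoints, card_insert_of_notMem h.s_notMem_chain, card_image_of_injOn h.injOn_range,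
    card_range]

lemma opt_loopPoints_le (hα : 0 < α) :
    opt α (loopPoints n s p) s ≤ D₁ ^ α + n * (1 + 2 ^ α) := by
  have hopt := opt_image_range_le hα.ne' (injOn_pathCons h.injOn fun _ hk => h.ne_s hk)
  rw [image_pathCons_range, sum_dist_pathCons] at hopt
  have hfirst : dist s (p 0) ^ α ≤ D₁ ^ α :=
    Real.rpow_le_rpow dist_nonneg h.dist_s_first hα.le
  exact hopt.trans (by linarith [h.sum_dist_chain_le hα.le])

lemma opt_insert_loopPoints_le (hα : 0 < α) :
    opt α (insert q (loopPoints n s p)) s ≤ 2 * (D₂ / 2) ^ α + n * (1 + 2 ^ α) := by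
  have hq : ∀ k ≤ 2 * n, p (2 * n - k) ≠ q := fun k _ => h.ne_q (Nat.sub_le _ k)
  have hs : ∀ k ≤ 2 * n + 1, pathCons q (fun k => p (2 * n - k)) k ≠ s
    | 0, _ => h.s_ne_q.symm
    | k + 1, _ => h.ne_s (Nat.sub_le _ k)
  have hopt := opt_image_range_le hα.ne'
    (injOn_pathCons (injOn_pathCons (injOn_comp_sub h.injOn) hq) hs)
  rw [image_pathCons_range, image_pathCons_range, image_comp_sub_range, insert_comm,
    sum_dist_pathCons, sum_dist_pathCons, sum_dist_comp_sub] at hopt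
  have hlast : dist q (p (2 * n)) ^ α ≤ (D₂ / 2) ^ α :=
    Real.rpow_le_rpow dist_nonneg h.dist_q_last hα.le
  have hfirst : dist s q ^ α = (D₂ / 2) ^ α := by rw [h.dist_s_q]
  refine hopt.trans ?_
  simp only [pathCons, Nat.sub_zero]
  linarith [h.sum_dist_chain_le hα.le]

lemma cost_loopPoints (ρ : X → ℝ) :
    cost α (loopPoints n s p) ρ = ρ s ^ α + ∑ u ∈ range (2 * n + 1), ρ (p u) ^ α := by
  rw [cost, loopPoints, sum_insert h.s_notMem_chain, sum_image h.injOn_range]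

lemma cost_insert_loopPoints (ρ : X → ℝ) :
    cost α (insert q (loopPoints n s p)) ρ
      = ρ q ^ α + (ρ s ^ α + ∑ u ∈ range (2 * n + 1), ρ (p u) ^ α) := by
  rw [cost, sum_insert h.q_notMem, ← cost, h.cost_loopPoints]

variable {S : Finset X} {ρ : X → ℝ}

lemma rpow_add_sum_le_cost (hρ : Feasible S s ρ) (hPS : loopPoints n s p ⊆ S) {z : X} (hz : z ∈ S)
    (hoff : ∀ k ≤ 2 * n, p k ≠ z) :
    ρ z ^ α + ∑ u ∈ range (2 * n + 1), ρ (p u) ^ α ≤ cost α S ρ := by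
  have hzchain : z ∉ (range (2 * n + 1)).image p := fun hzp => by
    obtain ⟨k, hk, hkz⟩ := mem_image.1 hzp
    exact hoff k (mem_range_succ_iff.1 hk) hkz
  rw [← sum_image (g := p) (f := fun x => ρ x ^ α) h.injOn_range,
    ← sum_insert (f := fun x => ρ x ^ α) hzchain]
  exact sum_le_sum_of_subset_of_nonneg
    (insert_subset hz ((subset_insert _ _).trans hPS)) fun x hx _ => Real.rpow_nonneg (hρ.1 x hx) α

lemma isReach (hα : 0 < α) (hρ : Feasible S s ρ) (hPS : loopPoints n s p ⊆ S)
    (hcost : cost α S ρ < (D₁ + D₂) ^ α) :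
    IsReach (2 * n) pos (fun u v => dist (p u) (p v) ≤ ρ (p u)) (fun u => ρ (p u)) where
  refl u hu := by
    rw [dist_self]
    exact hρ.1 _ (mem_of_loopPoints_subset hPS u hu)
  abs_sub_le u hu v hv huv :=
    (h.abs_pos_sub_le u hu v hv (huv.trans_lt (hρ.lt_of_cost_lt hα
      (add_pos h.D₁_pos h.D₂_pos).le hcost (mem_of_loopPoints_subset hPS u hu)))).trans huv

lemma chain_cost_ge (hα : 1 ≤ α) (hρ : Feasible S s ρ) (hPS : loopPoints n s p ⊆ S)
    (hSP : S ⊆ insert q (loopPoints n s p)) (hcost : cost α S ρ < (D₁ + D₂) ^ α) :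
    L * (1 + 2 ^ α) ≤ ∑ u ∈ range (2 * n + 1), ρ (p u) ^ α + 2 ^ α := by
  have hα₀ : 0 < α := by linarith
  refine h.alternating.price_le_of_crosses hα (h.isReach hα₀ hρ hPS hcost)
    fun i hi j hj hij => ?_
  have hjn : j < 2 * n := mem_range.1 (mem_filter.1 hj).1
  obtain ⟨u, hu, v, hv, huK, ⟨hiv, hvj⟩, huv⟩ :=
    hρ.exists_chain_edge_into (mem_of_loopPoints_subset hPS) (fun k => h.ne_s)
      (K := Set.Ioc i j) (fun z hz hoff k _ hk => by
        refine (hρ.lt_of_cost_lt hα₀ (add_pos h.D₁_pos h.D₂_pos).le hcost hz).trans_le ?_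
        rcases eq_or_eq_of_mem_insert_loopPoints (hSP hz) hoff with rfl | rfl
        exacts [h.le_dist_s_of_between i hi j hj k hk.1 hk.2,
          h.le_dist_q_of_between i hi j hj k hk.1 hk.2])
      hjn.le (Set.right_mem_Ioc.2 hij)
  rw [Set.mem_Ioc, not_and_or, not_lt, not_le] at huK
  exact huK.imp (fun hui => ⟨u, v, hui, hiv, hv, huv⟩) fun hju => ⟨u, v, hvj, hju, hu, huv⟩

lemma lt_of_off_chain (hα : 1 ≤ α) (hρ : Feasible S s ρ) (hPS : loopPoints n s p ⊆ S)
    (hSP : S ⊆ insert q (loopPoints n s p)) (hcost : cost α S ρ < (D₁ + D₂) ^ α) {D : ℝ}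
    (hD : 0 ≤ D) (hcostD : cost α S ρ + 2 ^ α < D ^ α + L * (1 + 2 ^ α)) {z : X} (hz : z ∈ S)
    (hoff : ∀ k ≤ 2 * n, p k ≠ z) : ρ z < D := by
  have hchain := h.chain_cost_ge hα hρ hPS hSP hcost
  have hzcost := h.rpow_add_sum_le_cost (α := α) hρ hPS hz hoff
  exact (Real.rpow_lt_rpow_iff (hρ.1 z hz) hD (by linarith : 0 < α)).1 (by linarith)

theorem forward_cost_ge (hα : 1 ≤ α) (hM : IsSurcharge α M)
    (hρ : Feasible (loopPoints n s p) s ρ) (hcost : cost α (loopPoints n s p) ρ < (D₁ + D₂) ^ α)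
    (hcostD : cost α (loopPoints n s p) ρ + 2 ^ α < D₂ ^ α + L * (1 + 2 ^ α)) :
    D₁ ^ α + L * (1 + 2 ^ α + M)
        + M * #{u ∈ range (2 * n + 1) | pos u % 3 = 0 ↔ 2 ≤ ρ (p u)}
      ≤ cost α (loopPoints n s p) ρ + M * #{u ∈ range (2 * n + 1) | pos u % 3 = 1} := by
  have hα₀ : 0 < α := by linarith
  have hsP : s ∈ loopPoints n s p := mem_insert_self _ _
  have hsD₂ : ρ s < D₂ := h.lt_of_off_chain hα hρ Subset.rfl (subset_insert _ _) hcost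
    h.D₂_pos.le hcostD hsP fun _ => h.ne_s
  have hD₁s : D₁ ≤ ρ s := by
    obtain ⟨_, -, v, hvP, rfl, hvs, huv⟩ := hρ.exists_edge_leaving (C := {s}) rfl
      (mem_of_loopPoints_subset Subset.rfl 0 (Nat.zero_le _)) (h.ne_s (Nat.zero_le _))
    obtain ⟨k, hk, rfl⟩ := mem_image.1 (mem_of_mem_insert_of_ne hvP hvs)
    exact (h.le_dist_s k (mem_range_succ_iff.1 hk)).trans huv
  have hcross : ∀ j ∈ liveGaps (2 * n) pos,
      CrossesRight (2 * n) (fun u v => dist (p u) (p v) ≤ ρ (p u)) j := fun j hj => by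
    obtain ⟨u, -, v, hv, huj, hjv, huv⟩ :=
      hρ.exists_chain_edge_into (mem_of_loopPoints_subset Subset.rfl) (fun k => h.ne_s)
        (K := Set.Ioi j) (fun z hz hoff k hk hjk => by
          obtain rfl := (mem_insert.1 hz).resolve_right fun hzp => by
            obtain ⟨i, hi, hiz⟩ := mem_image.1 hzp
            exact hoff i (mem_range_succ_iff.1 hi) hiz
          exact hsD₂.trans_le (h.le_dist_s_of_live j hj k hk hjk))
        (mem_range.1 (mem_filter.1 hj).1) (Nat.lt_succ_self j)
    exact ⟨u, v, not_lt.1 huj, hjv, hv, huv⟩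
  have hchain := h.alternating.price_add_abnormal_le_of_crossesRight hα hM
    (h.isReach hα₀ hρ Subset.rfl hcost) hcross
  have hs : D₁ ^ α ≤ ρ s ^ α := Real.rpow_le_rpow h.D₁_pos.le hD₁s hα₀.le
  rw [h.cost_loopPoints]
  linarith

lemma half_D₂_le_ranges (hρ : Feasible (insert q (loopPoints n s p)) s ρ) (hs : ρ s < D₁) :
    D₂ / 2 ≤ ρ s ∧ D₂ / 2 ≤ ρ q := by
  have hp₀ : p 0 ∈ insert q (loopPoints n s p) :=
    mem_of_loopPoints_subset (subset_insert _ _) 0 (Nat.zero_le _)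
  constructor
  · obtain ⟨_, -, v, hv, rfl, hvs, hsv⟩ := hρ.exists_edge_leaving (C := {s}) rfl hp₀
      (h.ne_s (Nat.zero_le _))
    by_cases hoff : ∀ k ≤ 2 * n, p k ≠ v
    · obtain rfl := (eq_or_eq_of_mem_insert_loopPoints hv hoff).resolve_left hvs
      exact h.dist_s_q.symm.trans_le hsv
    · push Not at hoff
      obtain ⟨k, hk, rfl⟩ := hoff
      exact absurd hs ((h.le_dist_s k hk).trans hsv).not_gt
  · obtain ⟨u, -, v, hv, hu, hvC, huv⟩ := hρ.exists_edge_leaving (C := {s, q})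
      (Set.mem_insert s _) hp₀
      (not_or.2 ⟨h.ne_s (Nat.zero_le _), h.ne_q (Nat.zero_le _)⟩)
    obtain ⟨k, hk, rfl⟩ : ∃ k ≤ 2 * n, p k = v := by
      by_contra! hoff
      exact hvC (eq_or_eq_of_mem_insert_loopPoints hv hoff)
    rcases hu with rfl | rfl
    exacts [absurd hs ((h.le_dist_s k hk).trans huv).not_gt, (h.le_dist_q k hk).trans huv]

theorem backward_cost_ge (hα : 1 ≤ α) (hM : IsSurcharge α M)
    (hρ : Feasible (insert q (loopPoints n s p)) s ρ)
    (hcost : cost α (insert q (loopPoints n s p)) ρ < (D₁ + D₂) ^ α)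
    (hcostD : cost α (insert q (loopPoints n s p)) ρ + 2 ^ α < D₁ ^ α + L * (1 + 2 ^ α)) :
    2 * (D₂ / 2) ^ α + L * (1 + 2 ^ α + M)
        + M * #{u ∈ range (2 * n + 1) | pos u % 3 = 1 ↔ 2 ≤ ρ (p u)}
      ≤ cost α (insert q (loopPoints n s p)) ρ
        + M * #{u ∈ range (2 * n + 1) | pos u % 3 = 0} := by
  have hα₀ : 0 < α := by linarith
  have hPS : loopPoints n s p ⊆ insert q (loopPoints n s p) := subset_insert _ _
  have hlt : ∀ z ∈ insert q (loopPoints n s p), (∀ k ≤ 2 * n, p k ≠ z) → ρ z < D₁ :=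
    fun z hz hoff => h.lt_of_off_chain hα hρ hPS Subset.rfl hcost h.D₁_pos.le hcostD hz hoff
  obtain ⟨hs, hq⟩ := h.half_D₂_le_ranges hρ
    (hlt s (mem_insert_of_mem (mem_insert_self _ _)) fun _ => h.ne_s)
  have hcross : ∀ j ∈ liveGaps (2 * n) pos,
      CrossesLeft (2 * n) (fun u v => dist (p u) (p v) ≤ ρ (p u)) j := fun j hj => by
    obtain ⟨u, hu, v, -, hju, hvj, huv⟩ :=
      hρ.exists_chain_edge_into (mem_of_loopPoints_subset hPS) (fun k => h.ne_s)
        (K := Set.Iic j) (fun z hz hoff k hk hkj => by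
          refine (hlt z hz hoff).trans_le ?_
          rcases eq_or_eq_of_mem_insert_loopPoints hz hoff with rfl | rfl
          exacts [h.le_dist_s k hk, h.le_dist_q_of_live j hj k hkj])
        (mem_range.1 (mem_filter.1 hj).1).le Set.self_mem_Iic
    exact ⟨u, v, hvj, not_le.1 hju, hu, huv⟩
  have hchain := h.alternating.price_add_abnormal_le_of_crossesLeft hα hM
    (h.isReach hα₀ hρ hPS hcost) hcross
  have hD₂ : 0 ≤ D₂ / 2 := (half_pos h.D₂_pos).le
  have hs : (D₂ / 2) ^ α ≤ ρ s ^ α := Real.rpow_le_rpow hD₂ hs hα₀.le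
  have hq : (D₂ / 2) ^ α ≤ ρ q ^ α := Real.rpow_le_rpow hD₂ hq hα₀.le
  rw [h.cost_insert_loopPoints]
  linarith

lemma le_ncard_changed_add_card (ρ ρ' : X → ℝ) :
    2 * n + 1 ≤ {x ∈ insert q (loopPoints n s p : Set X) | ρ' x ≠ Function.update ρ q 0 x}.ncard
      + (#{u ∈ range (2 * n + 1) | pos u % 3 = 0 ↔ 2 ≤ ρ (p u)}
        + #{u ∈ range (2 * n + 1) | pos u % 3 = 1 ↔ 2 ≤ ρ' (p u)}) := by
  let changed : Finset ℕ := {u ∈ range (2 * n + 1) | ρ' (p u) ≠ ρ (p u)}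
  have hchanged : #changed
      ≤ {x ∈ insert q (loopPoints n s p : Set X) | ρ' x ≠ Function.update ρ q 0 x}.ncard := by
    rw [← card_image_of_injOn (h.injOn_range.mono (filter_subset _ _)), ← Set.ncard_coe_finset]
    refine Set.ncard_le_ncard (fun x hx => ?_)
      (((finite_toSet _).insert q).subset (Set.sep_subset _ _))
    obtain ⟨u, hu, rfl⟩ := mem_image.1 (mem_coe.1 hx)
    obtain ⟨hu, hne⟩ := mem_filter.1 hu
    have hun := mem_range_succ_iff.1 hu
    refine ⟨.inr (mem_of_loopPoints_subset Subset.rfl u hun), ?_⟩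
    rwa [Function.update_of_ne (h.ne_q hun)]
  have hcover : range (2 * n + 1) ⊆ changed ∪
      ({u ∈ range (2 * n + 1) | pos u % 3 = 0 ↔ 2 ≤ ρ (p u)} ∪
        {u ∈ range (2 * n + 1) | pos u % 3 = 1 ↔ 2 ≤ ρ' (p u)}) := fun u hu => by
    have := h.alternating.mod_three_le u
    simp only [changed, mem_union, mem_filter, hu, true_and]
    by_cases heq : ρ' (p u) = ρ (p u)
    · rw [heq]
      rcases Nat.le_one_iff_eq_zero_or_eq_one.1 this with hmod | hmod <;> rw [hmod] <;> tauto
    · exact .inl heq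
  calc 2 * n + 1 = #(range (2 * n + 1)) := (card_range _).symm
    _ ≤ _ := card_le_card hcover
    _ ≤ _ := card_union_le _ _
    _ ≤ _ := add_le_add hchanged (card_union_le _ _)

/-- A cheap assignment has few abnormal ranges on either side of the insertion, but a point whose
range does not change is abnormal on one of the two sides. -/
theorem le_cost_add_mul_ncard_changed {ρ' : X → ℝ} (hα : 1 ≤ α) (hM : IsSurcharge α M)
    (hρ : Feasible (loopPoints n s p) s ρ) (hcost : cost α (loopPoints n s p) ρ < (D₁ + D₂) ^ α)
    (hcostD : cost α (loopPoints n s p) ρ + 2 ^ α < D₂ ^ α + L * (1 + 2 ^ α))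
    (hρ' : Feasible (insert q (loopPoints n s p)) s ρ')
    (hcost' : cost α (insert q (loopPoints n s p)) ρ' < (D₁ + D₂) ^ α)
    (hcostD' : cost α (insert q (loopPoints n s p)) ρ' + 2 ^ α < D₁ ^ α + L * (1 + 2 ^ α)) :
    D₁ ^ α + 2 * (D₂ / 2) ^ α + 2 * (L * (1 + 2 ^ α + M))
      ≤ cost α (loopPoints n s p) ρ + cost α (insert q (loopPoints n s p)) ρ'
        + M * {x ∈ insert q (loopPoints n s p : Set X) |
            ρ' x ≠ Function.update ρ q 0 x}.ncard := by
  have hforward := h.forward_cost_ge hα hM hρ hcost hcostD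
  have hbackward := h.backward_cost_ge hα hM hρ' hcost' hcostD'
  have hresidues := h.alternating.card_mod_three
  have hchanged := hresidues.trans_le (h.le_ncard_changed_add_card ρ ρ')
  have hchanged' := mul_le_mul_of_nonneg_left (Nat.cast_le (α := ℝ).2 hchanged) hM.nonneg
  push_cast at hchanged'
  linarith

end IsBroadcastLoop

end BroadcastLoop

section Plane

lemma dist_le_sum_abs_sub {ι : Type*} [Fintype ι] (x y : EuclideanSpace ℝ ι) :
    dist x y ≤ ∑ i, |x i - y i| := by
  rw [EuclideanSpace.dist_eq]
  refine Real.sqrt_le_iff.2 ⟨by positivity, ?_⟩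
  simp only [Real.dist_eq]
  exact sum_sq_le_sq_sum_of_nonneg fun i _ => abs_nonneg _

lemma dist_of_fst_eq (a x y : ℝ) : dist !₂[a, x] !₂[a, y] = |x - y| := by
  rw [EuclideanSpace.dist_eq, Fin.sum_univ_two]
  simp only [Matrix.cons_val_zero, Matrix.cons_val_one, dist_self, Real.dist_eq]
  rw [zero_pow two_ne_zero, zero_add, Real.sqrt_sq (abs_nonneg _)]

/-- The arc length from the point `0` to the point `k` of a chain with steps `1, 2, 1, 2, …`. -/
def arcLength (k : ℕ) : ℕ := k + k / 2

/-- The abscissa of the chain, which runs along three sides of a rectangle: away from the source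
for `3 * (e + l)`, down for `3 * c` at constant abscissa, and back for `3 * (e + l)`. -/
def loopX (e l c k : ℕ) : ℕ :=
  min (min (arcLength k) (3 * (2 * (e + l) + c) - arcLength k)) (3 * (e + l))

/-- The arc length covered within the middle part of the chain, of total length `3 * c`. -/
def loopDescent (e l c k : ℕ) : ℕ :=
  min (arcLength k - 3 * (e + l)) (3 * c)

/-- The arc length covered within the two outer parts of the chain, except for the `3 * e` next to
the ends, where the chain is too close to `s` or `q`. -/
def loopPos (e l c k : ℕ) : ℕ :=
  min (arcLength k - 3 * e) (3 * l) + min (arcLength k - 3 * (e + l + c)) (3 * l)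

/-- The ordinate of the chain, which goes down from `D₁` to `-D₂` at constant speed. -/
noncomputable def loopY (D₁ D₂ : ℝ) (e l c k : ℕ) : ℝ :=
  D₁ - (D₁ + D₂) / (3 * c : ℕ) * loopDescent e l c k

/-- The chain with abscissa `loopX` and ordinate `loopY`. -/
noncomputable def loopPoint (D₁ D₂ : ℝ) (e l c k : ℕ) : EuclideanSpace ℝ (Fin 2) :=
  !₂[(loopX e l c k : ℝ), loopY D₁ D₂ e l c k]

lemma arcLength_strictMono : StrictMono arcLength :=
  strictMono_nat_of_lt_succ fun k => by simp only [arcLength]; lia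

variable {e l c j k u v : ℕ}

lemma isAlternating_loopPos : IsAlternating (2 * (2 * (e + l) + c)) (2 * l) (loopPos e l c) where
  monotone := monotone_nat_of_le_succ fun k => by simp only [loopPos, arcLength]; lia
  mod_three_le k := by simp only [loopPos, arcLength]; lia
  succ_le k := by simp only [loopPos, arcLength]; lia
  last := by simp only [loopPos, arcLength]; lia

lemma arcLength_lt_of_mem_liveGaps {N : ℕ} (hj : j ∈ liveGaps N (loopPos e l c)) :
    3 * e < arcLength (j + 1) ∧ arcLength j < 3 * (e + 2 * l + c) := by
  have hlt := (mem_filter.1 hj).2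
  have := arcLength_strictMono (Nat.lt_succ_self j)
  simp only [loopPos] at hlt
  lia

lemma three_mul_le_loopX (he : 3 * e ≤ arcLength k) (hk : arcLength k ≤ 3 * (e + 2 * l + c)) :
    3 * e ≤ loopX e l c k := by
  simp only [loopX]; lia

lemma loopDescent_eq_zero (hk : arcLength k ≤ 3 * (e + l)) : loopDescent e l c k = 0 := by
  simp only [loopDescent]; lia

lemma loopDescent_eq (hk : 3 * (e + l + c) ≤ arcLength k) : loopDescent e l c k = 3 * c := by
  simp only [loopDescent]; lia

lemma loopPos_add_loopX_le_outbound (huv : u ≤ v) (h : arcLength v ≤ 3 * (e + l + c)) :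
    loopPos e l c v + loopX e l c u ≤ loopPos e l c u + loopX e l c v := by
  have := arcLength_strictMono.monotone huv
  simp only [loopPos, loopX]; lia

lemma loopPos_add_loopX_le_inbound (huv : u ≤ v) (h : 3 * (e + l) ≤ arcLength u) :
    loopPos e l c v + loopX e l c v ≤ loopPos e l c u + loopX e l c u := by
  have := arcLength_strictMono.monotone huv
  simp only [loopPos, loopX]; lia

lemma loopX_loopDescent_inj (hc : 0 < c) (hu : u ≤ 2 * (2 * (e + l) + c))
    (hv : v ≤ 2 * (2 * (e + l) + c)) (hx : loopX e l c u = loopX e l c v)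
    (hy : loopDescent e l c u = loopDescent e l c v) : u = v := by
  simp only [loopX, loopDescent, arcLength] at hx hy
  lia

lemma abs_loopX_sub_add_abs_loopDescent_sub_le (k : ℕ) :
    |(loopX e l c k : ℤ) - loopX e l c (k + 1)|
      + |(loopDescent e l c k : ℤ) - loopDescent e l c (k + 1)| ≤ 1 + (k % 2 : ℕ) := by
  simp only [loopX, loopDescent, arcLength, abs_eq_max_neg]; lia

variable {D₁ D₂ : ℝ}

lemma loopY_eq (hk : arcLength k ≤ 3 * (e + l)) : loopY D₁ D₂ e l c k = D₁ := by
  rw [loopY, loopDescent_eq_zero hk, Nat.cast_zero, mul_zero, sub_zero]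

lemma loopY_eq_neg (hc : 0 < c) (hk : 3 * (e + l + c) ≤ arcLength k) :
    loopY D₁ D₂ e l c k = -D₂ := by
  have hc₀ : ((3 * c : ℕ) : ℝ) ≠ 0 := by positivity
  rw [loopY, loopDescent_eq hk, div_mul_cancel₀ _ hc₀]
  ring

lemma abs_loopX_sub_le_dist (u v : ℕ) :
    |(loopX e l c u : ℝ) - loopX e l c v|
      ≤ dist (loopPoint D₁ D₂ e l c u) (loopPoint D₁ D₂ e l c v) :=
  PiLp.dist_apply_le (loopPoint D₁ D₂ e l c u) (loopPoint D₁ D₂ e l c v) 0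

lemma abs_loopY_sub_le_dist (u v : ℕ) :
    |loopY D₁ D₂ e l c u - loopY D₁ D₂ e l c v|
      ≤ dist (loopPoint D₁ D₂ e l c u) (loopPoint D₁ D₂ e l c v) :=
  PiLp.dist_apply_le (loopPoint D₁ D₂ e l c u) (loopPoint D₁ D₂ e l c v) 1

lemma loopX_le_dist (y : ℝ) (k : ℕ) : loopX e l c k ≤ dist !₂[0, y] (loopPoint D₁ D₂ e l c k) := by
  have := PiLp.dist_apply_le !₂[0, y] (loopPoint D₁ D₂ e l c k) 0
  rw [Real.dist_eq, abs_sub_comm] at this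
  simpa [loopPoint] using this

lemma abs_sub_loopY_le_dist (y : ℝ) (k : ℕ) :
    |y - loopY D₁ D₂ e l c k| ≤ dist !₂[0, y] (loopPoint D₁ D₂ e l c k) :=
  PiLp.dist_apply_le !₂[0, y] (loopPoint D₁ D₂ e l c k) 1

lemma abs_loopPos_sub_le_dist_of_le (hc : 0 < c) (huv : u ≤ v)
    (hdist : dist (loopPoint D₁ D₂ e l c u) (loopPoint D₁ D₂ e l c v) < D₁ + D₂) :
    |(loopPos e l c u : ℝ) - loopPos e l c v|
      ≤ dist (loopPoint D₁ D₂ e l c u) (loopPoint D₁ D₂ e l c v) := by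
  have hpos : (loopPos e l c u : ℝ) ≤ loopPos e l c v :=
    Nat.cast_le.2 (isAlternating_loopPos.monotone huv)
  refine le_trans ?_ (abs_loopX_sub_le_dist u v)
  rw [abs_sub_comm, abs_of_nonneg (sub_nonneg.2 hpos)]
  by_cases hv : arcLength v ≤ 3 * (e + l + c)
  · have hX : (loopPos e l c v + loopX e l c u : ℝ) ≤ loopPos e l c u + loopX e l c v :=
      mod_cast loopPos_add_loopX_le_outbound huv hv
    exact le_trans (by linarith) (neg_le_abs _)
  by_cases hu : 3 * (e + l) ≤ arcLength u
  · have hX : (loopPos e l c v + loopX e l c v : ℝ) ≤ loopPos e l c u + loopX e l c u :=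
      mod_cast loopPos_add_loopX_le_inbound huv hu
    exact le_trans (by linarith) (le_abs_self _)
  · have hY := abs_loopY_sub_le_dist (D₁ := D₁) (D₂ := D₂) (e := e) (l := l) (c := c) u v
    rw [loopY_eq (not_le.1 hu).le, loopY_eq_neg hc (not_le.1 hv).le, sub_neg_eq_add] at hY
    exact absurd hdist ((le_abs_self _).trans hY).not_gt

lemma abs_loopPos_sub_le_dist (hc : 0 < c)
    (hdist : dist (loopPoint D₁ D₂ e l c u) (loopPoint D₁ D₂ e l c v) < D₁ + D₂) :
    |(loopPos e l c u : ℝ) - loopPos e l c v|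
      ≤ dist (loopPoint D₁ D₂ e l c u) (loopPoint D₁ D₂ e l c v) := by
  rcases le_total u v with huv | hvu
  · exact abs_loopPos_sub_le_dist_of_le hc huv hdist
  · rw [abs_sub_comm, dist_comm]
    rw [dist_comm] at hdist
    exact abs_loopPos_sub_le_dist_of_le hc hvu hdist

lemma injOn_loopPoint (hc : 0 < c) (hD : 0 < D₁ + D₂) :
    Set.InjOn (loopPoint D₁ D₂ e l c) (Set.Iic (2 * (2 * (e + l) + c))) := by
  intro u hu v hv huv
  have hx : (loopX e l c u : ℝ) = loopX e l c v := congrArg (fun x => x 0) huv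
  have hy : loopY D₁ D₂ e l c u = loopY D₁ D₂ e l c v := congrArg (fun x => x 1) huv
  have hslope : (D₁ + D₂) / (3 * c : ℕ) ≠ 0 := by positivity
  exact loopX_loopDescent_inj hc hu hv (Nat.cast_injective hx)
    (Nat.cast_injective (mul_left_cancel₀ hslope (sub_right_injective hy)))

lemma dist_loopPoint_succ_le (hD : 0 ≤ D₁ + D₂) (hDc : D₁ + D₂ ≤ 3 * c) (k : ℕ) :
    dist (loopPoint D₁ D₂ e l c k) (loopPoint D₁ D₂ e l c (k + 1)) ≤ 1 + (k % 2 : ℕ) := by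
  have hslope₀ : 0 ≤ (D₁ + D₂) / (3 * c : ℕ) := by positivity
  have hslope : (D₁ + D₂) / (3 * c : ℕ) ≤ 1 :=
    div_le_one_of_le₀ (by push_cast; exact hDc) (Nat.cast_nonneg _)
  have hY : |loopY D₁ D₂ e l c k - loopY D₁ D₂ e l c (k + 1)|
      ≤ |(loopDescent e l c k : ℝ) - loopDescent e l c (k + 1)| := by
    rw [loopY, loopY, sub_sub_sub_cancel_left, ← mul_sub, abs_mul, abs_of_nonneg hslope₀,
      abs_sub_comm]
    exact mul_le_of_le_one_left (abs_nonneg _) hslope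
  have hstep := (Int.cast_le (R := ℝ)).2 (abs_loopX_sub_add_abs_loopDescent_sub_le (e := e)
    (l := l) (c := c) k)
  push_cast at hstep
  refine (dist_le_sum_abs_sub _ _).trans ?_
  rw [Fin.sum_univ_two]
  exact (add_le_add_right hY _).trans hstep

lemma le_dist_loopPoint_cases (hc : 0 < c) (hDe : D₁ + D₂ ≤ 3 * e) (y : ℝ) (k : ℕ) :
    D₁ + D₂ ≤ dist !₂[0, y] (loopPoint D₁ D₂ e l c k) ∨
    arcLength k < 3 * e ∧ |y - D₁| ≤ dist !₂[0, y] (loopPoint D₁ D₂ e l c k) ∨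
    3 * (e + 2 * l + c) < arcLength k ∧
      |y + D₂| ≤ dist !₂[0, y] (loopPoint D₁ D₂ e l c k) := by
  have hY := abs_sub_loopY_le_dist (D₁ := D₁) (D₂ := D₂) (e := e) (l := l) (c := c) y k
  rcases lt_or_ge (arcLength k) (3 * e) with hlow | hlow
  · rw [loopY_eq (by lia)] at hY
    exact .inr (.inl ⟨hlow, hY⟩)
  rcases lt_or_ge (3 * (e + 2 * l + c)) (arcLength k) with hhigh | hhigh
  · rw [loopY_eq_neg hc (by lia), sub_neg_eq_add] at hY
    exact .inr (.inr ⟨hhigh, hY⟩)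
  · have hX : (3 * e : ℝ) ≤ loopX e l c k := mod_cast three_mul_le_loopX hlow hhigh
    exact .inl (hDe.trans (hX.trans (loopX_le_dist y k)))

lemma loopPoint_zero : loopPoint D₁ D₂ e l c 0 = !₂[0, D₁] := by
  have hX : loopX e l c 0 = 0 := by simp only [loopX, arcLength]; lia
  rw [loopPoint, hX, loopY_eq (Nat.zero_le _), Nat.cast_zero]

lemma loopPoint_last (hc : 0 < c) :
    loopPoint D₁ D₂ e l c (2 * (2 * (e + l) + c)) = !₂[0, -D₂] := by
  have hX : loopX e l c (2 * (2 * (e + l) + c)) = 0 := by simp only [loopX, arcLength]; lia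
  rw [loopPoint, hX, loopY_eq_neg hc (by simp only [arcLength]; lia), Nat.cast_zero]

theorem isBroadcastLoop_loopPoint (hD₁ : 0 < D₁) (hD : D₁ ≤ D₂) (hDe : D₁ + D₂ ≤ 3 * e)
    (hDc : D₁ + D₂ ≤ 3 * c) :
    IsBroadcastLoop (2 * (e + l) + c) (2 * l) D₁ D₂ !₂[0, 0] !₂[0, -(D₂ / 2)]
      (loopPoint D₁ D₂ e l c) (loopPos e l c) := by
  have hc : 0 < c := Nat.cast_pos.1 (by linarith : (0 : ℝ) < c)
  have hs := le_dist_loopPoint_cases (l := l) hc hDe 0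
  have hq := le_dist_loopPoint_cases (l := l) hc hDe (-(D₂ / 2))
  rw [zero_sub, zero_add, abs_neg, abs_of_pos hD₁, abs_of_pos (hD₁.trans_le hD)] at hs
  rw [abs_of_neg (by linarith), neg_add_eq_sub, sub_half, abs_of_pos (by linarith)] at hq
  have hlow : ∀ i ∈ liveGaps (2 * (2 * (e + l) + c)) (loopPos e l c), ∀ k, i < k →
      3 * e < arcLength k := fun i hi k hik =>
    (arcLength_lt_of_mem_liveGaps hi).1.trans_le (arcLength_strictMono.monotone hik)
  have hhigh : ∀ j ∈ liveGaps (2 * (2 * (e + l) + c)) (loopPos e l c), ∀ k ≤ j,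
      arcLength k < 3 * (e + 2 * l + c) := fun j hj k hkj =>
    (arcLength_strictMono.monotone hkj).trans_lt (arcLength_lt_of_mem_liveGaps hj).2
  exact
  { alternating := isAlternating_loopPos
    D₁_pos := hD₁
    D₁_le_D₂ := hD
    dist_s_first := by rw [loopPoint_zero, dist_of_fst_eq, zero_sub, abs_neg, abs_of_pos hD₁]
    dist_s_q := by rw [dist_of_fst_eq, zero_sub, neg_neg, abs_of_pos (by linarith)]
    dist_q_last := by
      rw [loopPoint_last hc, dist_of_fst_eq, abs_of_pos (by linarith)]
      linarith
    dist_succ_le := fun k _ => dist_loopPoint_succ_le (by linarith) hDc k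
    le_dist_s := fun k _ => by rcases hs k with h | ⟨-, h⟩ | ⟨-, h⟩ <;> linarith
    le_dist_q := fun k _ => by rcases hq k with h | ⟨-, h⟩ | ⟨-, h⟩ <;> linarith
    le_dist_s_of_live := fun j hj k _ hjk => by
      rcases hs k with h | ⟨h, -⟩ | ⟨-, h⟩
      exacts [by linarith, absurd h (hlow j hj k hjk).not_gt, h]
    le_dist_q_of_live := fun j hj k hkj => by
      rcases hq k with h | ⟨-, h⟩ | ⟨h, -⟩
      exacts [by linarith, by linarith, absurd h (hhigh j hj k hkj).not_gt]
    le_dist_s_of_between := fun i hi j hj k hik hkj => (hs k).resolve_right fun h =>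
      h.elim (fun h => h.1.not_gt (hlow i hi k hik)) fun h => h.1.not_gt (hhigh j hj k hkj)
    le_dist_q_of_between := fun i hi j hj k hik hkj => (hq k).resolve_right fun h =>
      h.elim (fun h => h.1.not_gt (hlow i hi k hik)) fun h => h.1.not_gt (hhigh j hj k hkj)
    abs_pos_sub_le := fun _ _ _ _ => abs_loopPos_sub_le_dist hc
    injOn := injOn_loopPoint hc (by linarith) }

end Plane

section Constants

variable {α : ℝ}

/-- The surcharge on the long gaps which enters `cAlpha`. -/
noncomputable def gapSurcharge (α : ℝ) : ℝ :=
  min (2 ^ α - 1) (min ((3 ^ α - 2 ^ α - 1) / 2) ((4 ^ α - 2 ^ α - 2) / 3))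

lemma two_lt_two_rpow (hα : 1 < α) : (2 : ℝ) < 2 ^ α := by
  simpa only [Real.rpow_one] using Real.rpow_lt_rpow_of_exponent_lt one_lt_two hα

lemma two_rpow_eq_two_mul (α : ℝ) : (2 : ℝ) ^ α = 2 * 2 ^ (α - 1) := by
  rw [Real.rpow_sub_one two_ne_zero]
  ring

lemma two_rpow_mul_half_rpow {x : ℝ} (hx : 0 ≤ x) (α : ℝ) : 2 ^ α * (x / 2) ^ α = x ^ α := by
  rw [← Real.mul_rpow zero_le_two (div_nonneg hx zero_le_two), mul_div_cancel₀ x two_ne_zero]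

lemma gapSurcharge_pos (hα : 1 < α) : 0 < gapSurcharge α := by
  have h2 := two_lt_two_rpow hα
  have h3 : (2 : ℝ) ^ α + 1 < 3 ^ α := by
    have h3mul : (3 : ℝ) ^ α = 3 * 3 ^ (α - 1) := by
      rw [Real.rpow_sub_one three_ne_zero]
      ring
    have hle : (2 : ℝ) ^ (α - 1) ≤ 3 ^ (α - 1) :=
      Real.rpow_le_rpow zero_le_two (by norm_num) (by linarith)
    linarith [two_rpow_eq_two_mul α]
  have h4 : (4 : ℝ) ^ α = 2 ^ α * 2 ^ α := by
    rw [← Real.mul_rpow zero_le_two zero_le_two]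
    norm_num
  exact lt_min (by linarith) (lt_min (by linarith) (by nlinarith))

lemma isSurcharge_gapSurcharge (hα : 1 < α) : IsSurcharge α (gapSurcharge α) where
  nonneg := (gapSurcharge_pos hα).le
  le_two_rpow := min_le_left _ _
  two_mul_le := by
    have : gapSurcharge α ≤ (3 ^ α - 2 ^ α - 1) / 2 := (min_le_right _ _).trans (min_le_left _ _)
    linarith

lemma two_rpow_sub_four (α : ℝ) : (2 : ℝ) ^ (α - 4) = 2 ^ (α - 1) / 8 := by
  rw [show α - 4 = α - 1 - (3 : ℕ) by push_cast; ring, Real.rpow_sub_natCast two_ne_zero]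
  norm_num

lemma one_lt_cAlpha (hα : 1 < α) : 1 < cAlpha α := by
  have h2 := two_lt_two_rpow hα
  have hM : 0 < gapSurcharge α / (4 * (2 ^ α + 1)) := by
    have := gapSurcharge_pos hα
    positivity
  refine lt_min ?_ (lt_min ?_ (lt_add_of_pos_right 1 hM))
  · linarith [two_rpow_sub_four α, two_rpow_eq_two_mul α]
  · exact lt_add_of_pos_right 1 (div_pos (by linarith [two_rpow_eq_two_mul α]) (by positivity))

lemma eight_mul_cAlpha_sub_one_le (α : ℝ) : 8 * (cAlpha α - 1) ≤ 2 ^ (α - 1) - 1 := by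
  have : cAlpha α ≤ 1 + 2 ^ (α - 4) - 1 / 8 := min_le_left _ _
  linarith [two_rpow_sub_four α]

lemma six_mul_cAlpha_sub_one_le (α : ℝ) : 6 * (cAlpha α - 1) ≤ 1 := by
  have hle : cAlpha α ≤ 1 + (2 ^ (α - 1) - 1) / (3 * 2 ^ α + 2) :=
    (min_le_right _ _).trans (min_le_left _ _)
  have : ((2 : ℝ) ^ (α - 1) - 1) / (3 * 2 ^ α + 2) ≤ 1 / 6 := by
    rw [div_le_div_iff₀ (by positivity) (by norm_num)]
    linarith [two_rpow_eq_two_mul α]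
  linarith

lemma mul_cAlpha_sub_one_le_gapSurcharge (α : ℝ) :
    4 * (1 + 2 ^ α) * (cAlpha α - 1) ≤ gapSurcharge α := by
  have hle : cAlpha α ≤ 1 + gapSurcharge α / (4 * (2 ^ α + 1)) :=
    (min_le_right _ _).trans (min_le_right _ _)
  rw [← sub_le_iff_le_add', le_div_iff₀ (by positivity)] at hle
  linarith

end Constants

section LargeLoops

open Filter Asymptotics

variable {α ε : ℝ}

lemma isLittleO_const_mul_rpow {a y : ℝ} (ha : 0 ≤ a) (hy : y < 1) :
    (fun x : ℝ => (a * x) ^ y) =o[atTop] fun x => x := by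
  have hlim : Tendsto (fun x : ℝ => a ^ y * x ^ (-(1 - y))) atTop (nhds (a ^ y * 0)) :=
    (tendsto_rpow_neg_atTop (sub_pos.2 hy)).const_mul _
  rw [mul_zero] at hlim
  refine isLittleO_of_tendsto' ?_ (hlim.congr' ?_)
  · filter_upwards [eventually_ne_atTop 0] with x hx hx₀ using absurd hx₀ hx
  · filter_upwards [eventually_gt_atTop 0] with x hx
    rw [Real.mul_rpow ha hx.le, neg_sub, Real.rpow_sub_one hx.ne', mul_div_assoc]

lemma eventually_rpow_add_rpow_add_le {a b y δ : ℝ} (ha : 0 ≤ a) (hb : 0 ≤ b) (hy : y < 1)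
    (hδ : 0 < δ) (C : ℝ) :
    ∀ᶠ n : ℕ in atTop, (a * n) ^ y + 2 * (b * n) ^ y + C ≤ δ * n := by
  have hC : (fun _ : ℝ => C) =o[atTop] fun x => x := isLittleO_const_id_atTop C
  have hsum := (((isLittleO_const_mul_rpow ha hy).add
    ((isLittleO_const_mul_rpow hb hy).const_mul_left 2)).add hC).natCast_atTop
  filter_upwards [hsum.bound hδ] with n hn
  rw [Real.norm_natCast] at hn
  exact (Real.le_norm_self _).trans hn

lemma eventually_exists_rpow_eq {a b δ : ℝ} (hα : 1 < α) (ha : 0 < a) (hab : a ≤ 2 ^ α * b)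
    (hδ : 0 < δ) (C : ℝ) :
    ∀ᶠ n : ℕ in atTop, ∃ D₁ D₂ : ℝ, 0 < D₁ ∧ D₁ ≤ D₂ ∧ D₁ ^ α = a * n ∧ (D₂ / 2) ^ α = b * n ∧
      D₁ + D₂ + C ≤ δ * n := by
  have hα₀ : α ≠ 0 := by linarith
  have hb : 0 < b := pos_of_mul_pos_right (ha.trans_le hab) (by positivity)
  filter_upwards [eventually_gt_atTop 0,
    eventually_rpow_add_rpow_add_le ha.le hb.le (inv_lt_one_of_one_lt₀ hα) hδ C] with n hn hD
  refine ⟨(a * n) ^ α⁻¹, 2 * (b * n) ^ α⁻¹, by positivity, ?_,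
    Real.rpow_inv_rpow (by positivity) hα₀, ?_, hD⟩
  · calc (a * n) ^ α⁻¹ ≤ (2 ^ α * (b * n)) ^ α⁻¹ := by
          rw [← mul_assoc]
          gcongr
      _ = 2 * (b * n) ^ α⁻¹ := by
          rw [Real.mul_rpow (by positivity) (by positivity), Real.rpow_rpow_inv zero_le_two hα₀]
  · rw [mul_div_cancel_left₀ _ two_ne_zero, Real.rpow_inv_rpow (by positivity) hα₀]

lemma exists_loop_lengths {H : ℝ} {n : ℕ} (hH : 0 ≤ H) (hn : H + 4 ≤ n) :
    ∃ e l c : ℕ, n = 2 * (e + l) + c ∧ H ≤ 3 * e ∧ H ≤ 3 * c ∧ (n - (2 * l : ℕ) : ℝ) ≤ H + 4 := by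
  have hle := Nat.le_ceil (H / 3)
  have hlt := Nat.ceil_lt_add_one (div_nonneg hH zero_le_three)
  set e := ⌈H / 3⌉₊
  have h3e : (3 * e + 1 : ℕ) < H + 4 := by push_cast; linarith
  have hen : 3 * e + 1 < n := by exact_mod_cast h3e.trans_le hn
  obtain ⟨l, c, hn, hec, hl⟩ : ∃ l c, n = 2 * (e + l) + c ∧ e ≤ c ∧ n ≤ 3 * e + 1 + 2 * l :=
    ⟨(n - 2 * e - (e + (n + e) % 2)) / 2, e + (n + e) % 2, by lia⟩
  have hec : (e : ℝ) ≤ c := Nat.cast_le.2 hec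
  have hl : (n : ℝ) ≤ (3 * e + 1 : ℕ) + (2 * l : ℕ) := by exact_mod_cast hl
  exact ⟨e, l, c, hn, by linarith, by linarith, by linarith⟩

theorem eventually_exists_isBroadcastLoop (hα : 1 < α) (hε : 0 < ε)
    (hεα : 3 * ε ≤ 2 ^ (α - 1) - 1) :
    ∀ᶠ n : ℕ in atTop, ∃ (L : ℕ) (D₁ D₂ : ℝ) (s q : EuclideanSpace ℝ (Fin 2))
      (p : ℕ → EuclideanSpace ℝ (Fin 2)) (pos : ℕ → ℕ), IsBroadcastLoop n L D₁ D₂ s q p pos ∧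
        D₁ ^ α = (1 + 3 * ε) * (1 + 2 ^ α) * n ∧ (D₂ / 2) ^ α = (1 + 2 ^ α) / 2 * n ∧
        5 * (n - L + 1) ≤ ε * n := by
  have hab : (1 + 3 * ε) * (1 + 2 ^ α) ≤ 2 ^ α * ((1 + 2 ^ α) / 2) := by
    calc (1 + 3 * ε) * (1 + 2 ^ α) ≤ 2 ^ (α - 1) * (1 + 2 ^ α) := by gcongr; linarith
      _ = 2 ^ α * ((1 + 2 ^ α) / 2) := by
        linear_combination -(1 + 2 ^ α) / 2 * two_rpow_eq_two_mul α
  filter_upwards [eventually_exists_rpow_eq hα (by positivity) hab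
      (by positivity : 0 < min (ε / 5) 1) 5]
    with n ⟨D₁, D₂, hD₁, hD₁₂, hD₁α, hD₂α, hD⟩
  have hDε : (min (ε / 5) 1) * n ≤ ε / 5 * n := by gcongr; exact min_le_left _ _
  have hDn : (min (ε / 5) 1) * n ≤ 1 * n := by gcongr; exact min_le_right _ _
  obtain ⟨e, l, c, rfl, he, hc, hl⟩ :=
    exists_loop_lengths (n := n) (add_pos hD₁ (hD₁.trans_le hD₁₂)).le (by linarith)
  exact ⟨2 * l, D₁, D₂, _, _, _, _, isBroadcastLoop_loopPoint hD₁ hD₁₂ he hc, hD₁α, hD₂α,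
    by linarith⟩

end LargeLoops

section ChangedRanges

variable {X : Type*} [MetricSpace X] [DecidableEq X] {n L : ℕ} {D₁ D₂ α M ε : ℝ}
  {s q : X} {p : ℕ → X} {pos : ℕ → ℕ}

theorem IsBroadcastLoop.two_mul_div_three_lt_ncard_changed {ρ ρ' : X → ℝ}
    (h : IsBroadcastLoop n L D₁ D₂ s q p pos) (hα : 1 ≤ α) (hM : IsSurcharge α M) (hε : 0 < ε)
    (hεα : 8 * ε ≤ 2 ^ (α - 1) - 1) (hε₆ : 6 * ε ≤ 1) (hεM : 4 * (1 + 2 ^ α) * ε ≤ M)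
    (hD₁ : D₁ ^ α = (1 + 3 * ε) * (1 + 2 ^ α) * n) (hD₂ : (D₂ / 2) ^ α = (1 + 2 ^ α) / 2 * n)
    (hL : 5 * (n - L + 1) ≤ ε * n) (hρ : Feasible (loopPoints n s p) s ρ)
    (hcost : cost α (loopPoints n s p) ρ ≤ (1 + ε) * opt α (loopPoints n s p) s)
    (hρ' : Feasible (insert q (loopPoints n s p)) s ρ')
    (hcost' : cost α (insert q (loopPoints n s p)) ρ'
      ≤ (1 + ε) * opt α (insert q (loopPoints n s p)) s) :
    2 * (n : ℝ) / 3 < {x ∈ insert q (loopPoints n s p : Set X) |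
      ρ' x ≠ Function.update ρ q 0 x}.ncard := by
  have hα₀ : 0 < α := by linarith
  have hu : (0 : ℝ) < 1 + 2 ^ α := by positivity
  have hM₀ : 0 < M := lt_of_lt_of_le (by positivity) hεM
  have hMu : M ≤ 1 + 2 ^ α := by linarith [hM.le_two_rpow]
  have hU : 0 < (1 + 2 ^ α) * n * ε := by
    have := Real.rpow_pos_of_pos h.D₁_pos α
    rw [hD₁] at this
    have := pos_of_mul_pos_right this (by positivity)
    positivity
  have hD₂α : D₂ ^ α = 2 ^ (α - 1) * ((1 + 2 ^ α) * n) := by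
    rw [← two_rpow_mul_half_rpow h.D₂_pos.le, hD₂, two_rpow_eq_two_mul]
    ring
  have hH : D₁ ^ α + D₂ ^ α ≤ (D₁ + D₂) ^ α :=
    Real.add_rpow_le_rpow_add h.D₁_pos.le h.D₂_pos.le hα
  have hcostU : cost α (loopPoints n s p) ρ ≤ (2 + 5.5 * ε) * ((1 + 2 ^ α) * n) := by
    have := mul_le_mul_of_nonneg_left (h.opt_loopPoints_le hα₀) (by positivity : 0 ≤ 1 + ε)
    nlinarith
  have hcostU' : cost α (insert q (loopPoints n s p)) ρ' ≤ (2 + 2 * ε) * ((1 + 2 ^ α) * n) := by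
    have := mul_le_mul_of_nonneg_left (h.opt_insert_loopPoints_le hα₀) (by positivity : 0 ≤ 1 + ε)
    nlinarith
  have hLU := mul_le_mul_of_nonneg_right hL hu.le
  have hβ : 8 * ε * ((1 + 2 ^ α) * n) ≤ (2 ^ (α - 1) - 1) * ((1 + 2 ^ α) * n) := by gcongr
  have hchanged := h.le_cost_add_mul_ncard_changed hα hM hρ (by linarith) (by linarith) hρ'
    (by linarith) (by linarith)
  have hLM : 5 * (n - L) * (1 + 2 ^ α + M) ≤ 2 * ((1 + 2 ^ α) * n * ε) := by nlinarith
  have hMn : 4 * ((1 + 2 ^ α) * n * ε) ≤ M * n := by nlinarith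
  -- Altogether the number of changes is at least `(2 - 5.3 / 4) * n`.
  refine lt_of_mul_lt_mul_left (a := M) ?_ hM₀.le
  linarith

end ChangedRanges

/-- The dynamic broadcast range-assignment problem in the Euclidean plane ℝ²
admits no stable approximation scheme: there is a constant `c_α > 1` such that for all large
`n` there is an instance of `2n+2` points in ℝ² and an insertion forcing any
`c_α`-approximate update algorithm to modify more than `2n/3 - 1` ranges. -/
theorem no_sas_in_R2 (α : ℝ) (hα : 1 < α) :
    1 < cAlpha α ∧
    ∃ N : ℕ, ∀ n : ℕ, N ≤ n →
      ∃ (P : Finset (EuclideanSpace ℝ (Fin 2))) (s q : EuclideanSpace ℝ (Fin 2)),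
        s ∈ P ∧ q ∉ P ∧ P.card = 2 * n + 2 ∧
        ∀ ρ ρ' : EuclideanSpace ℝ (Fin 2) → ℝ,
          Feasible P s ρ → cost α P ρ ≤ cAlpha α * opt α P s →
          Feasible (insert q P) s ρ' →
          cost α (insert q P) ρ' ≤ cAlpha α * opt α (insert q P) s →
          2 * (n : ℝ) / 3 - 1 <
            (({p ∈ insert q (P : Set (EuclideanSpace ℝ (Fin 2))) |
                ρ' p ≠ Function.update ρ q 0 p}.ncard : ℝ)) := by
  have hε : 0 < cAlpha α - 1 := sub_pos.2 (one_lt_cAlpha hα)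
  have hεα := eight_mul_cAlpha_sub_one_le α
  refine ⟨one_lt_cAlpha hα, Filter.eventually_atTop.1 ?_⟩
  filter_upwards [eventually_exists_isBroadcastLoop hα hε (by linarith)]
    with n ⟨L, D₁, D₂, s, q, p, pos, h, hD₁, hD₂, hL⟩
  refine ⟨loopPoints n s p, s, q, mem_insert_self _ _, h.q_notMem, h.card_loopPoints,
    fun ρ ρ' hρ hcost hρ' hcost' => ?_⟩
  have hchanged := h.two_mul_div_three_lt_ncard_changed hα.le (isSurcharge_gapSurcharge hα) hε hεα
    (six_mul_cAlpha_sub_one_le α) (mul_cAlpha_sub_one_le_gapSurcharge α) hD₁ hD₂ hL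
    hρ (by rwa [add_sub_cancel]) hρ' (by rwa [add_sub_cancel])
  linarith
end

section
/- There exists a function F assigning to every finite sequence (q₁, …, q_m) of distinct points of ℝ ∖ {0} a feasible range assignment ρ_m = F(q₁,…,q_m) for the set P_m = {0, q₁, …, q_m} (with source 0) such that for every such sequence: (i) cost_2(ρ_m) ≤ (6 + 2√5)·opt_2(P_m), and (ii) the number of points p ∈ P_m with ρ_m(p) ≠ ρ_{m−1}(p) is at most 1, where ρ_{m−1} = F(q₁,…,q_{m−1}) is extended by ρ_{m−1}(q_m) = 0. (This expresses the existence of a 1-stable, insertion-only (6+2√5)-approximation algorithm for the broadcast range-assignment problem in ℝ¹ for α = 2.) -/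
open Finset

attribute [local instance] Classical.propDecidable

/-! Each half-line is cut into blocks of at most four consecutive gaps. The start of a block reaches
to its end, and in a block of four gaps the midpoint does so too; hence a block that receives a
fifth gap can be split at its midpoint by shortening a single range. With gaps `u`, `v`, `w`, `t` a
full block costs `(u + v + w + t) ^ 2 + (w + t) ^ 2`, which is at most `2φ²` times the sum of the
squared gaps, where `φ` is the golden ratio. Any feasible assignment bridges every gap of a
half-line from the side of the source, and this forces its cost to be at least the sum of the
squared gaps there. Since there are two half-lines, the ratio is `2 · 2φ² = 6 + 2√5`. -/

namespace Feasible

variable {X Y : Type*} [MetricSpace X] [MetricSpace Y] {P Q : Finset X} {s q : X} {ρ σ : X → ℝ}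

theorem nonneg (h : Feasible P s ρ) {p : X} (hp : p ∈ P) : 0 ≤ ρ p :=
  h.1 p hp

theorem insert_of_dist_le (hρ : 0 ≤ ρ) (hdist : ∀ p ∈ P, dist s p ≤ ρ s) :
    Feasible (insert s P) s ρ := by
  refine ⟨fun p _ => hρ p, fun p hp => ?_⟩
  refine ⟨1, fun i => if i = 0 then s else p, by simp, by simp, fun i _ => ?_, fun i hi => ?_⟩
  · dsimp only
    split_ifs
    exacts [mem_insert_self s P, hp]
  · obtain rfl : i = 0 := by lia
    rcases mem_insert.1 hp with rfl | hp
    · simpa using hρ p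
    · simpa using hdist p hp

theorem union (hP : Feasible P s ρ) (hQ : Feasible Q q σ) (hq : q ∈ P) :
    Feasible (P ∪ Q) s (ρ ⊔ σ) := by
  refine ⟨fun p hp => (mem_union.1 hp).elim (fun hp => le_sup_of_le_left (hP.nonneg hp))
    fun hp => le_sup_of_le_right (hQ.nonneg hp), fun p hp => ?_⟩
  have path_in_P : ∀ p ∈ P, ∃ (m : ℕ) (f : ℕ → X), f 0 = s ∧ f m = p ∧
      (∀ i ≤ m, f i ∈ P ∪ Q) ∧ ∀ i < m, dist (f i) (f (i + 1)) ≤ (ρ ⊔ σ) (f i) := by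
    intro p hp
    obtain ⟨m, f, hs, hm, hmem, hdist⟩ := hP.2 p hp
    exact ⟨m, f, hs, hm, fun i hi => mem_union_left _ (hmem i hi),
      fun i hi => le_sup_of_le_left (hdist i hi)⟩
  rcases mem_union.1 hp with hp | hp
  · exact path_in_P p hp
  obtain ⟨m, f, hs, hm, hmem, hdist⟩ := path_in_P q hq
  obtain ⟨n, g, hq, hn, hmem', hdist'⟩ := hQ.2 p hp
  refine ⟨m + n, fun i => if i ≤ m then f i else g (i - m), by simp [hs], ?_, ?_, ?_⟩
  · rcases n.eq_zero_or_pos with rfl | hn_pos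
    · simp [hm, ← hn, hq]
    · simp [hn_pos.ne', hn]
  · intro i hi
    dsimp only
    split_ifs with him
    · exact hmem i him
    · exact mem_union_right _ (hmem' _ (by lia))
  · intro i hi
    rcases lt_trichotomy i m with him | rfl | him
    · simpa [him.le, Nat.succ_le_of_lt him] using hdist i him
    · simpa [hm, hq] using le_sup_of_le_right (a := ρ q) (hq ▸ hdist' 0 (by lia))
    · have hsub : i + 1 - m = i - m + 1 := by lia
      simpa [him.not_ge, (him.trans i.lt_succ_self).not_ge, hsub] using
        le_sup_of_le_right (a := ρ (g (i - m))) (hdist' (i - m) (by lia))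

theorem image (e : X ≃ᵢ Y) (h : Feasible P s ρ) :
    Feasible (P.image e) (e s) (ρ ∘ e.symm) := by
  simp only [Feasible, forall_mem_image, Function.comp_apply, e.symm_apply_apply]
  refine ⟨h.1, fun p hp => ?_⟩
  obtain ⟨m, f, hs, hm, hmem, hdist⟩ := h.2 p hp
  exact ⟨m, e ∘ f, congrArg e hs, congrArg e hm, fun i hi => mem_image_of_mem e (hmem i hi),
    fun i hi => by simpa [e.dist_eq] using hdist i hi⟩

end Feasible

section Cost

variable {X Y : Type*} {ρ σ : X → ℝ}

theorem cost_two (P : Finset X) (ρ : X → ℝ) : cost 2 P ρ = ∑ p ∈ P, ρ p ^ 2 := by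
  simp only [cost, Real.rpow_two]

theorem cost_sup_le (α : ℝ) (P : Finset X) (hρ : 0 ≤ ρ) (hσ : 0 ≤ σ) :
    cost α P (ρ ⊔ σ) ≤ cost α P ρ + cost α P σ := by
  simp only [cost, ← sum_add_distrib]
  refine sum_le_sum fun p _ => ?_
  have hρp : 0 ≤ ρ p ^ α := Real.rpow_nonneg (hρ p) α
  have hσp : 0 ≤ σ p ^ α := Real.rpow_nonneg (hσ p) α
  rcases max_choice (ρ p) (σ p) with h | h <;> rw [Pi.sup_apply, h] <;> linarith

theorem cost_single_le {α : ℝ} (hα : α ≠ 0) (P : Finset X) (a : X) {v : ℝ} (hv : 0 ≤ v) :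
    cost α P (Pi.single a v) ≤ v ^ α := by
  have hpow : ∀ p, (Pi.single a v : X → ℝ) p ^ α = if a = p then v ^ α else 0 := by
    intro p
    by_cases hp : a = p
    · simp [hp]
    · simp [hp, Ne.symm hp, Real.zero_rpow hα]
  simp only [cost, hpow, sum_ite_eq]
  split_ifs
  exacts [le_rfl, Real.rpow_nonneg hv α]

theorem cost_image (α : ℝ) (P : Finset X) (ρ : X → ℝ) (e : X ≃ Y) :
    cost α (P.image e) (ρ ∘ e.symm) = cost α P ρ := by
  simp [cost, sum_image e.injective.injOn]

end Cost

/-- The sum of the squared gaps between consecutive terms of `a :: t`. -/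
def sqGaps : ℝ → List ℝ → ℝ
  | _, [] => 0
  | a, b :: t => (b - a) ^ 2 + sqGaps b t

theorem Feasible.exists_le_and_le_add {P : Finset ℝ} {s u v : ℝ} {ρ : ℝ → ℝ}
    (h : Feasible P s ρ) (hsu : s ≤ u) (hv : v ∈ P) (hgap : ∀ p ∈ P, p ≤ u ∨ v ≤ p) :
    ∃ c ∈ P, c ≤ u ∧ v ≤ c + ρ c := by
  obtain ⟨m, f, hs, hm, hmem, hdist⟩ := h.2 v hv
  by_contra! hshort
  have path_le : ∀ i ≤ m, f i ≤ u := by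
    intro i
    induction i with
    | zero => exact fun _ => hs.trans_le hsu
    | succ i ih =>
      intro hi
      have hstep : f (i + 1) - f i ≤ ρ (f i) := (le_abs_self _).trans <| by
        simpa [Real.dist_eq, abs_sub_comm] using hdist i (by lia)
      have hlt : f i + ρ (f i) < v := hshort _ (hmem i (by lia)) (ih (by lia))
      exact (hgap _ (hmem _ hi)).resolve_right (by linarith)
  have hvu : v ≤ u := hm ▸ path_le m le_rfl
  linarith [hshort v hv hvu, h.nonneg hv]

/-- The length of the part of the interval `[c, c + r]` lying to the left of `x`, for `0 ≤ r`. -/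
noncomputable def reachBefore (c r x : ℝ) : ℝ :=
  min r (max 0 (x - c))

theorem reachBefore_nonneg {c r x : ℝ} (hr : 0 ≤ r) : 0 ≤ reachBefore c r x :=
  le_min hr (le_max_left _ _)

theorem reachBefore_le {c r x : ℝ} : reachBefore c r x ≤ r :=
  min_le_left _ _

theorem reachBefore_mono {c r : ℝ} : Monotone (reachBefore c r) := fun x y hxy => by
  unfold reachBefore
  gcongr

theorem sq_gap_add_sq_reachBefore_le {a b c r : ℝ} (hca : c ≤ a) (hab : a ≤ b) (hbr : b ≤ c + r) :
    (b - a) ^ 2 + reachBefore c r a ^ 2 ≤ reachBefore c r b ^ 2 := by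
  have eq_sub : ∀ x, c ≤ x → x ≤ c + r → reachBefore c r x = x - c := fun x hcx hxr => by
    rw [reachBefore, max_eq_right (by linarith), min_eq_right (by linarith)]
  rw [eq_sub a hca (by linarith), eq_sub b (by linarith) hbr]
  nlinarith [mul_nonneg (sub_nonneg.2 hab) (sub_nonneg.2 hca)]

/- Moving the cut-off `x` from `a` to the next point `b` never decreases a term of
`∑ c, reachBefore c (ρ c) x ^ 2`, and a point `c` whose range bridges the gap has its term grow from
`(a - c) ^ 2` to `(b - c) ^ 2`, hence by at least `(b - a) ^ 2`. -/
theorem Feasible.sq_gap_add_sum_le {P : Finset ℝ} {s a b : ℝ} {ρ : ℝ → ℝ}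
    (h : Feasible P s ρ) (hsa : s ≤ a) (hab : a ≤ b) (hb : b ∈ P)
    (hgap : ∀ p ∈ P, p ≤ a ∨ b ≤ p) :
    (b - a) ^ 2 + ∑ c ∈ P, reachBefore c (ρ c) a ^ 2 ≤ ∑ c ∈ P, reachBefore c (ρ c) b ^ 2 := by
  obtain ⟨c, hc, hca, hbc⟩ := h.exists_le_and_le_add hsa hb hgap
  rw [← add_sum_erase P _ hc, ← add_sum_erase P _ hc, ← add_assoc]
  refine add_le_add (sq_gap_add_sq_reachBefore_le hca hab hbc) (sum_le_sum fun d hd => ?_)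
  have := reachBefore_nonneg (c := d) (x := a) (h.nonneg (mem_of_mem_erase hd))
  gcongr
  exact reachBefore_mono hab

theorem Feasible.sqGaps_add_sum_le {P : Finset ℝ} {s a : ℝ} {ρ : ℝ → ℝ} {t : List ℝ}
    (h : Feasible P s ρ) (hsa : s ≤ a) (ht : (a :: t).Pairwise (· ≤ ·))
    (htP : ∀ p ∈ t, p ∈ P) (hPt : ∀ p ∈ P, p ≤ a ∨ p ∈ t) :
    sqGaps a t + ∑ c ∈ P, reachBefore c (ρ c) a ^ 2 ≤ cost 2 P ρ := by
  induction t generalizing a with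
  | nil =>
    rw [sqGaps, zero_add, cost_two]
    refine sum_le_sum fun c hc => ?_
    have := reachBefore_nonneg (c := c) (x := a) (h.nonneg hc)
    gcongr
    exact reachBefore_le
  | cons b t ih =>
    rw [List.forall_mem_cons] at htP
    rw [List.pairwise_cons, List.forall_mem_cons] at ht
    obtain ⟨⟨hab, -⟩, hbt⟩ := ht
    simp only [List.mem_cons] at hPt
    have hgap : ∀ p ∈ P, p ≤ a ∨ b ≤ p := fun p hp =>
      (hPt p hp).imp_right (Or.rec ge_of_eq (List.rel_of_pairwise_cons hbt))
    have hPt' : ∀ p ∈ P, p ≤ b ∨ p ∈ t := fun p hp => by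
      rcases hPt p hp with hpa | rfl | hpt
      exacts [.inl (hpa.trans hab), .inl le_rfl, .inr hpt]
    calc sqGaps a (b :: t) + ∑ c ∈ P, reachBefore c (ρ c) a ^ 2
        = sqGaps b t + ((b - a) ^ 2 + ∑ c ∈ P, reachBefore c (ρ c) a ^ 2) := by
          rw [sqGaps]; ring
      _ ≤ sqGaps b t + ∑ c ∈ P, reachBefore c (ρ c) b ^ 2 := by
          gcongr; exact h.sq_gap_add_sum_le hsa hab htP.1 hgap
      _ ≤ cost 2 P ρ := ih (hsa.trans hab) hbt htP.2 hPt'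

theorem Feasible.sqGaps_le_cost {P : Finset ℝ} {s : ℝ} {ρ : ℝ → ℝ} {t : List ℝ}
    (h : Feasible P s ρ) (ht : (s :: t).Pairwise (· ≤ ·))
    (htP : ∀ p ∈ t, p ∈ P) (hPt : ∀ p ∈ P, p ≤ s ∨ p ∈ t) :
    sqGaps s t ≤ cost 2 P ρ :=
  (le_add_of_nonneg_right (by positivity)).trans (h.sqGaps_add_sum_le le_rfl ht htP hPt)

open Real in
/-- The matrix `!![1, 1; 1, 2]` has largest eigenvalue `φ ^ 2`. -/
theorem sq_add_add_sq_le (u v : ℝ) :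
    (u + v) ^ 2 + v ^ 2 ≤ goldenRatio ^ 2 * (u ^ 2 + v ^ 2) := by
  have hdiff : goldenRatio ^ 2 * (u ^ 2 + v ^ 2) - ((u + v) ^ 2 + v ^ 2) =
      goldenRatio * (u + goldenConj * v) ^ 2 := by
    grind [goldenRatio_sq, goldenRatio_mul_goldenConj, goldenRatio_add_goldenConj]
  have := mul_nonneg goldenRatio_pos.le (sq_nonneg (u + goldenConj * v))
  linarith

open Real in
theorem sq_sum_four_add_sq_sum_two_le (u v w t : ℝ) :
    (u + v + w + t) ^ 2 + (w + t) ^ 2 ≤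
      2 * goldenRatio ^ 2 * (u ^ 2 + v ^ 2 + w ^ 2 + t ^ 2) :=
  calc (u + v + w + t) ^ 2 + (w + t) ^ 2
      = ((u + v) + (w + t)) ^ 2 + (w + t) ^ 2 := by ring
    _ ≤ goldenRatio ^ 2 * ((u + v) ^ 2 + (w + t) ^ 2) := sq_add_add_sq_le _ _
    _ ≤ goldenRatio ^ 2 * (2 * (u ^ 2 + v ^ 2) + 2 * (w ^ 2 + t ^ 2)) := by
        gcongr <;> exact add_sq_le
    _ = 2 * goldenRatio ^ 2 * (u ^ 2 + v ^ 2 + w ^ 2 + t ^ 2) := by ring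

/-- A run of at most four consecutive gaps, given by its points in increasing order. The point at
which the run starts is the endpoint of the preceding block and is not stored. -/
inductive Block where
  | one (b : ℝ)
  | two (x b : ℝ)
  | three (x y b : ℝ)
  | four (x y z b : ℝ)

namespace Block

/-- The points of a block, in order. -/
def points : Block → List ℝ
  | one b => [b]
  | two x b => [x, b]
  | three x y b => [x, y, b]
  | four x y z b => [x, y, z, b]

/-- The last point of a block, from which the next block starts. -/
def endpoint : Block → ℝ
  | one b => b
  | two _ b => b
  | three _ _ b => b
  | four _ _ _ b => b

/-- The ranges assigned to the points of a block that starts at `a`: the point `a` reaches to the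
end, and in a block of four gaps the midpoint reaches to the end as well. -/
noncomputable def ranges (a : ℝ) : Block → ℝ → ℝ
  | one b => Pi.single a (b - a)
  | two _ b => Pi.single a (b - a)
  | three _ _ b => Pi.single a (b - a)
  | four _ y _ b => Pi.single a (b - a) ⊔ Pi.single y (b - y)

/-- Insertion of `q` into the block `two x b`. -/
noncomputable def insertTwo (q x b : ℝ) : Block :=
  if q ≤ x then three q x b else three x q b

/-- Insertion of a point lying before the endpoint of a block. As the midpoint of a block of four
gaps already reaches to the end, such a block is first split there, by shortening one range. -/
noncomputable def insert (q : ℝ) : Block → List Block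
  | one b => [two q b]
  | two x b => [insertTwo q x b]
  | three x y b => [if q ≤ x then four q x y b else if q ≤ y then four x q y b else four x y q b]
  | four x y z b => if q ≤ y then [insertTwo q x y, two z b] else [two x y, insertTwo q z b]

theorem endpoint_mem_points (B : Block) : B.endpoint ∈ B.points := by
  cases B <;> simp [endpoint, points]

theorem le_endpoint {B : Block} (hB : B.points.Pairwise (· ≤ ·)) {p : ℝ} (hp : p ∈ B.points) :
    p ≤ B.endpoint := by
  cases B <;> simp only [points, endpoint, List.pairwise_cons, List.mem_cons] at * <;> grind

theorem ranges_nonneg {a : ℝ} {B : Block} (hB : (a :: B.points).Pairwise (· ≤ ·)) :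
    0 ≤ B.ranges a := by
  have ha : a ≤ B.endpoint := List.rel_of_pairwise_cons hB B.endpoint_mem_points
  have hsingle : (0 : ℝ → ℝ) ≤ Pi.single a (B.endpoint - a) :=
    Pi.single_nonneg.2 (sub_nonneg.2 ha)
  cases B
  case four => exact le_sup_of_le_left hsingle
  all_goals exact hsingle

theorem endpoint_sub_le_ranges (a : ℝ) (B : Block) : B.endpoint - a ≤ B.ranges a a := by
  cases B <;> simp [ranges, endpoint]

theorem ranges_eq_zero {a p : ℝ} {B : Block} (hpa : p ≠ a) (hp : p ∉ B.points) :
    B.ranges a p = 0 := by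
  cases B <;> simp_all [ranges, points]

theorem feasible_ranges {a : ℝ} {B : Block} (hB : (a :: B.points).Pairwise (· ≤ ·)) :
    Feasible (Insert.insert a B.points.toFinset) a (B.ranges a) := by
  refine .insert_of_dist_le (ranges_nonneg hB) fun p hp => ?_
  rw [List.mem_toFinset] at hp
  have hap : a ≤ p := List.rel_of_pairwise_cons hB hp
  have hpe : p ≤ B.endpoint := le_endpoint hB.of_cons hp
  calc dist a p = p - a := by rw [dist_comm, Real.dist_eq, abs_of_nonneg (sub_nonneg.2 hap)]
    _ ≤ B.endpoint - a := by gcongr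
    _ ≤ B.ranges a a := B.endpoint_sub_le_ranges a

theorem sqGaps_points_append (a : ℝ) (B : Block) (t : List ℝ) :
    sqGaps a (B.points ++ t) = sqGaps a B.points + sqGaps B.endpoint t := by
  cases B <;> simp only [points, endpoint, sqGaps, List.cons_append, List.nil_append] <;> ring

theorem cost_ranges_le (P : Finset ℝ) {a : ℝ} {B : Block}
    (hB : (a :: B.points).Pairwise (· ≤ ·)) :
    cost 2 P (B.ranges a) ≤ 2 * Real.goldenRatio ^ 2 * sqGaps a B.points := by
  have ha : a ≤ B.endpoint := List.rel_of_pairwise_cons hB B.endpoint_mem_points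
  have single_le : ∀ c d : ℝ, c ≤ d → cost 2 P (Pi.single c (d - c)) ≤ (d - c) ^ 2 :=
    fun c d hcd => by
      simpa using cost_single_le two_ne_zero P c (sub_nonneg.2 hcd)
  cases B with
  | one b =>
    refine (single_le a b ha).trans ?_
    have := sq_sum_four_add_sq_sum_two_le (b - a) 0 0 0
    simp only [points, sqGaps]
    linarith
  | two x b =>
    refine (single_le a b ha).trans ?_
    have := sq_sum_four_add_sq_sum_two_le (x - a) (b - x) 0 0
    simp only [points, sqGaps]
    grind
  | three x y b =>
    refine (single_le a b ha).trans ?_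
    have := sq_sum_four_add_sq_sum_two_le (x - a) (y - x) (b - y) 0
    simp only [points, sqGaps]
    nlinarith [sq_nonneg (b - y)]
  | four x y z b =>
    have hyb : y ≤ b := le_endpoint hB.of_cons (by simp [points])
    calc cost 2 P ((four x y z b).ranges a)
        ≤ (b - a) ^ 2 + (b - y) ^ 2 :=
          (cost_sup_le 2 P (Pi.single_nonneg.2 (sub_nonneg.2 ha))
            (Pi.single_nonneg.2 (sub_nonneg.2 hyb))).trans
            (add_le_add (single_le a b ha) (single_le y b hyb))
      _ = ((x - a) + (y - x) + (z - y) + (b - z)) ^ 2 + ((z - y) + (b - z)) ^ 2 := by ring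
      _ ≤ _ := sq_sum_four_add_sq_sum_two_le _ _ _ _
      _ = 2 * Real.goldenRatio ^ 2 * sqGaps a (four x y z b).points := by
          simp only [points, sqGaps]; ring

end Block

/-- A partition of the points of a half-line into consecutive blocks. -/
abbrev Chain := List Block

namespace Chain

/-- The points of all blocks, in order. -/
def points (C : Chain) : List ℝ :=
  C.flatMap Block.points

/-- The ranges assigned by a chain whose first block starts at the given point. -/
noncomputable def ranges : ℝ → Chain → ℝ → ℝ
  | _, [] => 0
  | a, B :: C => B.ranges a ⊔ ranges B.endpoint C

/-- Insertion of a point, which opens a new block if it lies beyond all others. -/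
noncomputable def insert (q : ℝ) : Chain → Chain
  | [] => [.one q]
  | B :: C => if q ≤ B.endpoint then B.insert q ++ C else B :: insert q C

theorem points_cons (B : Block) (C : Chain) : points (B :: C) = B.points ++ points C :=
  List.flatMap_cons

theorem pairwise_block {a : ℝ} {B : Block} {C : Chain}
    (h : (a :: points (B :: C)).Pairwise (· ≤ ·)) : (a :: B.points).Pairwise (· ≤ ·) :=
  h.sublist (by simp [points_cons])

theorem pairwise_tail {a : ℝ} {B : Block} {C : Chain}
    (h : (a :: points (B :: C)).Pairwise (· ≤ ·)) :
    (B.endpoint :: points C).Pairwise (· ≤ ·) := by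
  rw [points_cons] at h
  exact h.of_cons.sublist
    ((List.singleton_sublist.2 B.endpoint_mem_points).append (List.Sublist.refl (points C)))

theorem ranges_nonneg (a : ℝ) (C : Chain) : 0 ≤ ranges a C := by
  induction C generalizing a with
  | nil => exact le_rfl
  | cons B C ih => exact le_sup_of_le_right (ih B.endpoint)

theorem ranges_eq_zero {a p : ℝ} {C : Chain} (hpa : p ≠ a) (hp : p ∉ points C) :
    ranges a C p = 0 := by
  induction C generalizing a with
  | nil => rfl
  | cons B C ih =>
    rw [points_cons, List.mem_append, not_or] at hp
    have hpe : p ≠ B.endpoint := fun h => hp.1 (h ▸ B.endpoint_mem_points)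
    simp [ranges, Block.ranges_eq_zero hpa hp.1, ih hpe hp.2]

theorem feasible_ranges {a : ℝ} {C : Chain} (hC : (a :: points C).Pairwise (· ≤ ·)) :
    Feasible (Insert.insert a (points C).toFinset) a (ranges a C) := by
  induction C generalizing a with
  | nil => exact .insert_of_dist_le le_rfl (by simp [points])
  | cons B C ih =>
    have hpoints : Insert.insert a (points (B :: C)).toFinset =
        Insert.insert a B.points.toFinset ∪ Insert.insert B.endpoint (points C).toFinset := by
      ext p
      have := B.endpoint_mem_points
      simp only [points_cons, List.toFinset_append, mem_insert, mem_union, List.mem_toFinset]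
      grind
    rw [hpoints]
    exact (Block.feasible_ranges (pairwise_block hC)).union (ih (pairwise_tail hC))
      (by simp [B.endpoint_mem_points])

theorem cost_ranges_le (P : Finset ℝ) {a : ℝ} {C : Chain}
    (hC : (a :: points C).Pairwise (· ≤ ·)) :
    cost 2 P (ranges a C) ≤ 2 * Real.goldenRatio ^ 2 * sqGaps a (points C) := by
  induction C generalizing a with
  | nil => simp [cost_two, ranges, points, sqGaps]
  | cons B C ih =>
    have hB := pairwise_block hC
    calc cost 2 P (ranges a (B :: C))
        ≤ cost 2 P (B.ranges a) + cost 2 P (ranges B.endpoint C) :=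
          cost_sup_le 2 P (Block.ranges_nonneg hB) (ranges_nonneg _ C)
      _ ≤ 2 * Real.goldenRatio ^ 2 * sqGaps a B.points +
          2 * Real.goldenRatio ^ 2 * sqGaps B.endpoint (points C) :=
          add_le_add (Block.cost_ranges_le P hB) (ih (pairwise_tail hC))
      _ = 2 * Real.goldenRatio ^ 2 * sqGaps a (points (B :: C)) := by
          rw [points_cons, Block.sqGaps_points_append, mul_add]

theorem points_block_insert_append {q : ℝ} {B : Block} (hB : B.points.Pairwise (· ≤ ·))
    (hq : q ≤ B.endpoint) (C : Chain) :
    points (B.insert q ++ C) = List.orderedInsert (· ≤ ·) q (points (B :: C)) := by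
  cases B <;>
    simp only [Block.points, Block.endpoint, List.pairwise_cons, List.mem_cons] at hB hq <;>
    simp only [points, Block.insert, Block.insertTwo, List.orderedInsert, Block.points,
      List.flatMap_cons, List.cons_append, List.nil_append] <;> grind [Block.points]

theorem points_insert {q : ℝ} {C : Chain} (hC : (points C).Pairwise (· ≤ ·)) :
    points (insert q C) = List.orderedInsert (· ≤ ·) q (points C) := by
  induction C with
  | nil => rfl
  | cons B C ih =>
    rw [points_cons, List.pairwise_append] at hC
    rw [insert]
    split_ifs with hq
    · exact points_block_insert_append hC.1 hq C
    · rw [points_cons, points_cons, ih hC.2.1]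
      have hlt : ∀ p ∈ B.points, ¬ q ≤ p := fun p hp hqp =>
        hq (hqp.trans (Block.le_endpoint hC.1 hp))
      simp only [List.orderedInsert_eq_take_drop]
      rw [List.takeWhile_append_of_pos (by simpa using hlt),
        List.dropWhile_append_of_pos (by simpa using hlt), List.append_assoc]

theorem exists_ranges_block_insert_append_eq (a q : ℝ) (B : Block) (C : Chain) :
    ∃ c, ∀ p ≠ c, ranges a (B.insert q ++ C) p = ranges a (B :: C) p := by
  cases B with
  | one b => exact ⟨a, fun p _ => rfl⟩
  | two x b =>
    refine ⟨a, fun p _ => ?_⟩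
    simp only [Block.insert, Block.insertTwo]
    split_ifs <;> rfl
  | three x y b =>
    have hfour : ∀ x' y' z', ∀ p ≠ y',
        ranges a (.four x' y' z' b :: C) p = ranges a (.three x y b :: C) p := by
      intro x' y' z' p hp
      have hnonneg : 0 ≤ ranges b C p := ranges_nonneg b C p
      simp [ranges, Block.ranges, Block.endpoint, hp, max_assoc, hnonneg]
    rw [Block.insert]
    split_ifs
    exacts [⟨x, hfour _ _ _⟩, ⟨q, hfour _ _ _⟩, ⟨y, hfour _ _ _⟩]
  | four x y z b =>
    refine ⟨a, fun p hp => ?_⟩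
    simp only [Block.insert, Block.insertTwo]
    split_ifs <;> simp [ranges, Block.ranges, Block.endpoint, hp, max_assoc]

theorem exists_ranges_insert_eq (a q : ℝ) (C : Chain) :
    ∃ c, ∀ p ≠ c, ranges a (insert q C) p = ranges a C p := by
  induction C generalizing a with
  | nil => exact ⟨a, fun p hp => by simp [insert, ranges, Block.ranges, hp]⟩
  | cons B C ih =>
    rw [insert]
    split_ifs with hq
    · exact exists_ranges_block_insert_append_eq a q B C
    · obtain ⟨c, hc⟩ := ih B.endpoint
      exact ⟨c, fun p hp => congrArg (B.ranges a p ⊔ ·) (hc p hp)⟩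

end Chain

/-- The chain obtained by inserting the positive terms of `l` one by one. -/
noncomputable def positiveChain (l : List ℝ) : Chain :=
  (l.filter (0 < ·)).foldl (fun C q => C.insert q) []

/-- The algorithm: the two half-lines are served independently, both from the source `0`. -/
noncomputable def broadcast (l : List ℝ) : ℝ → ℝ :=
  (positiveChain l).ranges 0 ⊔
    (positiveChain (l.map Neg.neg)).ranges 0 ∘ Neg.neg

theorem positiveChain_append_of_pos (l : List ℝ) {q : ℝ} (hq : 0 < q) :
    positiveChain (l ++ [q]) = (positiveChain l).insert q := by
  simp [positiveChain, hq]

theorem positiveChain_append_of_nonpos (l : List ℝ) {q : ℝ} (hq : q ≤ 0) :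
    positiveChain (l ++ [q]) = positiveChain l := by
  simp [positiveChain, hq.not_gt]

theorem pairwise_points_positiveChain (l : List ℝ) :
    (positiveChain l).points.Pairwise (· ≤ ·) := by
  induction l using List.reverseRecOn with
  | nil => exact .nil
  | append_singleton l q ih =>
    rcases lt_or_ge 0 q with hq | hq
    · rw [positiveChain_append_of_pos l hq, Chain.points_insert ih]
      exact ih.orderedInsert q _
    · rwa [positiveChain_append_of_nonpos l hq]

theorem mem_points_positiveChain {l : List ℝ} {p : ℝ} :
    p ∈ (positiveChain l).points ↔ p ∈ l ∧ 0 < p := by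
  induction l using List.reverseRecOn with
  | nil => simp [positiveChain, Chain.points]
  | append_singleton l q ih =>
    rcases lt_or_ge 0 q with hq | hq
    · rw [positiveChain_append_of_pos l hq, Chain.points_insert (pairwise_points_positiveChain l),
        List.mem_orderedInsert, ih]
      grind
    · rw [positiveChain_append_of_nonpos l hq, ih]
      grind

theorem pairwise_zero_cons_points_positiveChain (l : List ℝ) :
    (0 :: (positiveChain l).points).Pairwise (· ≤ ·) :=
  List.pairwise_cons.2
    ⟨fun _ hp => (mem_points_positiveChain.1 hp).2.le, pairwise_points_positiveChain l⟩

theorem mem_image_neg {P : Finset ℝ} {p : ℝ} : p ∈ P.image (IsometryEquiv.neg ℝ) ↔ -p ∈ P := by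
  simp [neg_eq_iff_eq_neg]

theorem image_neg_insert_zero (l : List ℝ) :
    (insert 0 l.toFinset).image (IsometryEquiv.neg ℝ) = insert 0 (l.map Neg.neg).toFinset := by
  ext p
  simp

theorem feasible_broadcast (l : List ℝ) : Feasible (insert 0 l.toFinset) 0 (broadcast l) := by
  have hpos := Chain.feasible_ranges (pairwise_zero_cons_points_positiveChain l)
  have hneg := (Chain.feasible_ranges
    (pairwise_zero_cons_points_positiveChain (l.map Neg.neg))).image (IsometryEquiv.neg ℝ)
  have hpoints : insert 0 l.toFinset = insert 0 (positiveChain l).points.toFinset ∪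
      (insert 0 (positiveChain (l.map Neg.neg)).points.toFinset).image (IsometryEquiv.neg ℝ) := by
    ext p
    rw [mem_union, mem_image_neg]
    simp only [mem_insert, List.mem_toFinset, mem_points_positiveChain, List.mem_map]
    grind
  rw [hpoints]
  exact hpos.union hneg (by simp)

theorem cost_broadcast_le_sqGaps (P : Finset ℝ) (l : List ℝ) :
    cost 2 P (broadcast l) ≤ 2 * Real.goldenRatio ^ 2 *
      (sqGaps 0 (positiveChain l).points + sqGaps 0 (positiveChain (l.map Neg.neg)).points) := by
  have hcost : ∀ (Q : Finset ℝ) (l : List ℝ), cost 2 Q ((positiveChain l).ranges 0) ≤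
      2 * Real.goldenRatio ^ 2 * sqGaps 0 (positiveChain l).points := fun Q l =>
    Chain.cost_ranges_le Q (pairwise_zero_cons_points_positiveChain l)
  have hreflect : cost 2 P ((positiveChain (l.map Neg.neg)).ranges 0 ∘ Neg.neg) =
      cost 2 (P.image (Equiv.neg ℝ)) ((positiveChain (l.map Neg.neg)).ranges 0) := by
    rw [← cost_image 2 P _ (Equiv.neg ℝ)]
    simp [Function.comp_def]
  calc cost 2 P (broadcast l)
      ≤ cost 2 P ((positiveChain l).ranges 0) +
          cost 2 P ((positiveChain (l.map Neg.neg)).ranges 0 ∘ Neg.neg) :=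
        cost_sup_le 2 P (Chain.ranges_nonneg _ _) fun p => Chain.ranges_nonneg _ _ (-p)
    _ ≤ _ := by
        rw [hreflect, mul_add]
        exact add_le_add (hcost _ _) (hcost _ _)

theorem sqGaps_positiveChain_le_cost {l : List ℝ} {ρ : ℝ → ℝ}
    (h : Feasible (insert 0 l.toFinset) 0 ρ) :
    sqGaps 0 (positiveChain l).points ≤ cost 2 (insert 0 l.toFinset) ρ := by
  refine h.sqGaps_le_cost (pairwise_zero_cons_points_positiveChain l) (fun p hp => ?_)
    fun p hp => ?_
  · simp [(mem_points_positiveChain.1 hp).1]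
  · rw [mem_points_positiveChain]
    rw [mem_insert, List.mem_toFinset] at hp
    grind

theorem sqGaps_add_sqGaps_le_two_mul_opt (l : List ℝ) :
    sqGaps 0 (positiveChain l).points + sqGaps 0 (positiveChain (l.map Neg.neg)).points ≤
      2 * opt 2 (insert 0 l.toFinset) 0 := by
  rw [← div_le_iff₀' two_pos]
  refine le_csInf ⟨_, _, feasible_broadcast l, rfl⟩ ?_
  rintro _ ⟨ρ, hρ, rfl⟩
  have hpos := sqGaps_positiveChain_le_cost hρ
  have hreflect : Feasible (insert 0 (l.map Neg.neg).toFinset) 0 (ρ ∘ Neg.neg) := by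
    have := hρ.image (IsometryEquiv.neg ℝ)
    rwa [image_neg_insert_zero, IsometryEquiv.neg_symm, IsometryEquiv.neg_apply, neg_zero] at this
  have hneg := sqGaps_positiveChain_le_cost hreflect
  have hcost : cost 2 (insert 0 (l.map Neg.neg).toFinset) (ρ ∘ Neg.neg) =
      cost 2 (insert 0 l.toFinset) ρ := by
    rw [← image_neg_insert_zero]
    exact cost_image 2 _ ρ (IsometryEquiv.neg ℝ).toEquiv
  linarith

theorem cost_broadcast_le (l : List ℝ) :
    cost 2 (insert 0 l.toFinset) (broadcast l) ≤
      (6 + 2 * Real.sqrt 5) * opt 2 (insert 0 l.toFinset) 0 :=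
  calc cost 2 (insert 0 l.toFinset) (broadcast l)
      ≤ 2 * Real.goldenRatio ^ 2 * (sqGaps 0 (positiveChain l).points +
          sqGaps 0 (positiveChain (l.map Neg.neg)).points) := cost_broadcast_le_sqGaps _ l
    _ ≤ 2 * Real.goldenRatio ^ 2 * (2 * opt 2 (insert 0 l.toFinset) 0) := by
        gcongr; exact sqGaps_add_sqGaps_le_two_mul_opt l
    _ = (6 + 2 * Real.sqrt 5) * opt 2 (insert 0 l.toFinset) 0 := by
        rw [Real.goldenRatio_sq, Real.goldenRatio]; ring

theorem broadcast_eq_zero {l : List ℝ} {q : ℝ} (hq : q ≠ 0) (hql : q ∉ l) :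
    broadcast l q = 0 := by
  have hpos : (positiveChain l).ranges 0 q = 0 :=
    Chain.ranges_eq_zero hq fun h => hql (mem_points_positiveChain.1 h).1
  have hneg : (positiveChain (l.map Neg.neg)).ranges 0 (-q) = 0 :=
    Chain.ranges_eq_zero (neg_ne_zero.2 hq) fun h => hql (by
      simpa using (mem_points_positiveChain.1 h).1)
  simp [broadcast, hpos, hneg]

theorem exists_broadcast_append_eq (l : List ℝ) (q : ℝ) :
    ∃ c, ∀ p ≠ c, broadcast (l ++ [q]) p = broadcast l p := by
  simp only [broadcast, List.map_append, List.map_singleton]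
  rcases lt_trichotomy q 0 with hq | rfl | hq
  · obtain ⟨c, hc⟩ := Chain.exists_ranges_insert_eq 0 (-q) (positiveChain (l.map Neg.neg))
    refine ⟨-c, fun p hp => ?_⟩
    have hpc : -p ≠ c := fun h => hp (neg_eq_iff_eq_neg.1 h)
    rw [positiveChain_append_of_nonpos l hq.le, positiveChain_append_of_pos _ (neg_pos.2 hq),
      Pi.sup_apply, Function.comp_apply, hc (-p) hpc, Pi.sup_apply, Function.comp_apply]
  · refine ⟨0, fun p _ => ?_⟩
    rw [positiveChain_append_of_nonpos l le_rfl, neg_zero, positiveChain_append_of_nonpos _ le_rfl]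
  · obtain ⟨c, hc⟩ := Chain.exists_ranges_insert_eq 0 q (positiveChain l)
    refine ⟨c, fun p hp => ?_⟩
    rw [positiveChain_append_of_pos l hq, positiveChain_append_of_nonpos _ (neg_nonpos.2 hq.le),
      Pi.sup_apply, hc p hp, Pi.sup_apply]

/-- There is a 1-stable insertion-only (6+2√5)-approximation algorithm for
the broadcast range-assignment problem in ℝ¹ for α = 2: a function `F` on insertion sequences
(finite lists of distinct nonzero reals) producing feasible assignments for
`P_m = {0, q₁, …, q_m}` with cost at most `(6+2√5)·opt`, such that appending a new point
changes at most one range. -/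
theorem one_stable_insertion_only :
    ∃ F : List ℝ → (ℝ → ℝ),
      (∀ l : List ℝ, l.Nodup → (∀ x ∈ l, x ≠ 0) →
        Feasible (insert (0:ℝ) l.toFinset) 0 (F l) ∧
        cost 2 (insert (0:ℝ) l.toFinset) (F l) ≤
          (6 + 2 * Real.sqrt 5) * opt 2 (insert (0:ℝ) l.toFinset) 0) ∧
      (∀ (l : List ℝ) (q : ℝ), (l ++ [q]).Nodup → (∀ x ∈ l ++ [q], x ≠ 0) →
        {p ∈ insert (0:ℝ) ((l ++ [q]).toFinset : Set ℝ) |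
          F (l ++ [q]) p ≠ Function.update (F l) q 0 p}.ncard ≤ 1) := by
  refine ⟨broadcast, fun l _ _ => ⟨feasible_broadcast l, cost_broadcast_le l⟩, fun l q hl h0 => ?_⟩
  have hq : q ∉ l := fun h => (List.nodup_append.1 hl).2.2 q h q (by simp) rfl
  have hzero : broadcast l q = 0 := broadcast_eq_zero (h0 q (by simp)) hq
  obtain ⟨c, hc⟩ := exists_broadcast_append_eq l q
  refine Set.ncard_le_one_iff_subset_singleton (Set.toFinite _) |>.2 ⟨c, ?_⟩
  rintro p ⟨-, hp⟩
  rw [← hzero, Function.update_eq_self] at hp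
  exact not_imp_comm.1 (hc p) hp
end

section
/- Let α > 1 be real, let P ⊂ ℝ be finite with 0 ∈ P (source 0), and let k ≥ 1 be an integer. Then there exists a feasible range assignment ρ for P with cost_α(ρ) ≤ (1 + 2^α/k^{α−1})·opt_α(P) such that at most k points p ∈ P ∖ {0} that possess a successor satisfy ρ(p) < |suc(p) − p|. Here, for p ∈ P with p > 0 the successor suc(p) is min{q ∈ P : q > p} (when this set is nonempty), and for p ∈ P with p < 0 it is max{q ∈ P : q < p} (when this set is nonempty). (This is the cost guarantee of the canonical range assignment ρ_k, in which all but at most k of the zero-range points of an optimal solution are given their standard range.) -/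
open Finset

attribute [local instance] Classical.propDecidable

/-- `p` has a successor in `P`: a point of `P` strictly beyond `p` on the same side of the
source 0. -/
def HasSuc (P : Finset ℝ) (p : ℝ) : Prop :=
  (0 < p ∧ ∃ q ∈ P, p < q) ∨ (p < 0 ∧ ∃ q ∈ P, q < p)

/-- The successor of `p` in `P`: the nearest point of `P` strictly to the right of `p` if
`p > 0`, and the nearest point strictly to the left of `p` if `p < 0`. -/
noncomputable def suc (P : Finset ℝ) (p : ℝ) : ℝ :=
  if 0 < p then sInf {q | q ∈ P ∧ p < q} else sSup {q | q ∈ P ∧ q < p}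

/-!
Process the points reached by a feasible `ρ` one at a time, recording the interval reached so far.
A point `w` that enlarges this interval on one side only uncovers gaps of total length at most
`ρ w`, so by superadditivity of `x ↦ x ^ α` these gaps can be crossed by hops of standard range at
total cost at most `ρ w ^ α`. A point that enlarges it on both sides becomes the new hub: its disc
covers everything reached, so only the gaps between the source and the hub still have to be
crossed, and these are paid for by the points processed earlier. Hence some solution with a single
hub costs at most the optimum.

If the hub has range `r`, the gaps bypassed by its disc have total length at most `2 * r`, so at
most `k` of them are longer than `2 * r / k`. Crossing all the others by hops of standard range
costs at most `(2 * r / k) ^ (α - 1) * (2 * r) = 2 ^ α / k ^ (α - 1) * r ^ α` more.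
-/

open scoped Interval

section PowerSums

variable {ι : Type*} {α : ℝ} {s : Finset ι} {x : ι → ℝ}

theorem sum_rpow_le_rpow_sub_one_mul_sum {M : ℝ} (hα : 1 ≤ α) (hx : ∀ i ∈ s, 0 ≤ x i)
    (hM : ∀ i ∈ s, x i ≤ M) : ∑ i ∈ s, x i ^ α ≤ M ^ (α - 1) * ∑ i ∈ s, x i := by
  rw [mul_sum]
  refine sum_le_sum fun i hi => ?_
  calc x i ^ α = x i ^ (α - 1) * x i := by
        rw [← Real.rpow_add_one' (hx i hi) (by linarith), sub_add_cancel]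
    _ ≤ M ^ (α - 1) * x i := by
        gcongr
        exacts [hx i hi, hx i hi, hM i hi]

theorem sum_rpow_le_rpow_sum (hα : 1 ≤ α) (hx : ∀ i ∈ s, 0 ≤ x i) :
    ∑ i ∈ s, x i ^ α ≤ (∑ i ∈ s, x i) ^ α := by
  calc ∑ i ∈ s, x i ^ α ≤ (∑ i ∈ s, x i) ^ (α - 1) * ∑ i ∈ s, x i :=
        sum_rpow_le_rpow_sub_one_mul_sum hα hx fun _ hi => single_le_sum hx hi
    _ = (∑ i ∈ s, x i) ^ α := by
        rw [← Real.rpow_add_one' (sum_nonneg hx) (by linarith), sub_add_cancel]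

theorem card_filter_div_lt_le {L : ℝ} {k : ℕ} (hk : 0 < k) (hx : ∀ i ∈ s, 0 ≤ x i)
    (hL : ∑ i ∈ s, x i ≤ L) : #{i ∈ s | L / k < x i} ≤ k := by
  have hL0 : 0 ≤ L := (sum_nonneg hx).trans hL
  by_contra! hcard
  refine lt_irrefl L ?_
  calc L = k * (L / k) := (mul_div_cancel₀ L (by positivity)).symm
    _ ≤ #{i ∈ s | L / k < x i} * (L / k) := by gcongr
    _ = ∑ i ∈ s with L / k < x i, L / k := by rw [sum_const, nsmul_eq_mul]
    _ < ∑ i ∈ s with L / k < x i, x i :=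
        sum_lt_sum_of_nonempty (card_pos.1 (by lia)) fun i hi => (mem_filter.1 hi).2
    _ ≤ ∑ i ∈ s, x i := sum_le_sum_of_subset_of_nonneg (filter_subset _ _) fun i hi _ => hx i hi
    _ ≤ L := hL

theorem exists_subset_card_le_sum_sdiff_rpow_le {L : ℝ} {k : ℕ} (hα : 1 ≤ α) (hk : 0 < k)
    (hx : ∀ i ∈ s, 0 ≤ x i) (hL : ∑ i ∈ s, x i ≤ L) :
    ∃ t ⊆ s, #t ≤ k ∧ ∑ i ∈ s \ t, x i ^ α ≤ L ^ α / (k : ℝ) ^ (α - 1) := by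
  have hL0 : 0 ≤ L := (sum_nonneg hx).trans hL
  refine ⟨{i ∈ s | L / k < x i}, filter_subset _ _, card_filter_div_lt_le hk hx hL, ?_⟩
  rw [← filter_not]
  calc ∑ i ∈ s with ¬ L / k < x i, x i ^ α
      ≤ (L / k) ^ (α - 1) * ∑ i ∈ s with ¬ L / k < x i, x i :=
        sum_rpow_le_rpow_sub_one_mul_sum hα (fun i hi => hx i (mem_filter.1 hi).1)
          fun i hi => not_lt.1 (mem_filter.1 hi).2
    _ ≤ (L / k) ^ (α - 1) * L := by
        gcongr
        exact (sum_le_sum_of_subset_of_nonneg (filter_subset _ _) fun i hi _ => hx i hi).trans hL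
    _ = L ^ α / (k : ℝ) ^ (α - 1) := by
        rw [Real.div_rpow hL0 k.cast_nonneg, div_mul_eq_mul_div,
          ← Real.rpow_add_one' hL0 (by linarith), sub_add_cancel]

end PowerSums

theorem sum_dist_le_of_pairwiseDisjoint_uIoo {ι : Type*} {s : Finset ι} {f g : ι → ℝ} {a b : ℝ}
    (hdisj : (s : Set ι).PairwiseDisjoint fun i => Set.uIoo (f i) (g i))
    (hsub : ∀ i ∈ s, Set.uIoo (f i) (g i) ⊆ [[a, b]]) :
    ∑ i ∈ s, dist (f i) (g i) ≤ dist a b := by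
  have volume_uIoo (x y : ℝ) : MeasureTheory.volume.real (Set.uIoo x y) = dist x y := by
    rw [Set.uIoo, Real.volume_real_Ioo_of_le inf_le_sup, Real.dist_eq]
    exact max_sub_min_eq_abs' x y
  have volume_uIcc : MeasureTheory.volume.real [[a, b]] = dist a b := by
    rw [Set.uIcc, Real.volume_real_Icc_of_le inf_le_sup, Real.dist_eq]
    exact max_sub_min_eq_abs' a b
  calc ∑ i ∈ s, dist (f i) (g i)
      = MeasureTheory.volume.real (⋃ i ∈ s, Set.uIoo (f i) (g i)) := by
        rw [MeasureTheory.measureReal_biUnion_finset hdisj (fun _ _ => measurableSet_Ioo)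
          fun _ _ => measure_Ioo_lt_top.ne]
        simp only [volume_uIoo]
    _ ≤ MeasureTheory.volume.real [[a, b]] :=
        MeasureTheory.measureReal_mono (Set.iUnion₂_subset hsub) isCompact_uIcc.measure_ne_top
    _ = dist a b := volume_uIcc

theorem cost_insert {X : Type*} {α : ℝ} {S : Finset X} {ρ : X → ℝ} {w : X} (h : w ∉ S) :
    cost α (insert w S) ρ = cost α S ρ + ρ w ^ α := by
  rw [cost, sum_insert h, add_comm, cost]

section Reachability

theorem reflTransGen_iff_exists_seq {X : Type*} {r : X → X → Prop} {a b : X} :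
    Relation.ReflTransGen r a b ↔
      ∃ (m : ℕ) (f : ℕ → X), f 0 = a ∧ f m = b ∧ ∀ i < m, r (f i) (f (i + 1)) := by
  constructor
  · intro h
    induction h using Relation.ReflTransGen.head_induction_on with
    | refl => exact ⟨0, fun _ => b, rfl, rfl, by simp⟩
    | @head a _ hab _ ih =>
      obtain ⟨m, f, rfl, hfm, hf⟩ := ih
      exact ⟨m + 1, fun | 0 => a | i + 1 => f i, rfl, hfm, fun i hi => by
        cases i with
        | zero => exact hab
        | succ j => exact hf j (by lia)⟩
  · rintro ⟨m, f, rfl, rfl, hf⟩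
    exact (reflTransGen_of_succ_of_le (fun i j => r (f i) (f j)) (fun i hi => hf i hi.2)
      m.zero_le).lift f fun _ _ h => h

variable {X : Type*} [MetricSpace X]

/-- One step of the broadcast: both points belong to `P` and `q` lies within the range of `p`. -/
def Hop (P : Finset X) (ρ : X → ℝ) (p q : X) : Prop :=
  p ∈ P ∧ q ∈ P ∧ dist p q ≤ ρ p

theorem feasible_iff_reflTransGen_hop {P : Finset X} {s : X} {ρ : X → ℝ} :
    Feasible P s ρ ↔
      (∀ p ∈ P, 0 ≤ ρ p) ∧ ∀ p ∈ P, Relation.ReflTransGen (Hop P ρ) s p := by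
  refine and_congr_right fun _ => forall₂_congr fun p hp => ?_
  rw [reflTransGen_iff_exists_seq]
  refine exists₂_congr fun m f => and_congr_right fun _ => and_congr_right fun hfm => ?_
  constructor
  · rintro ⟨hmem, hdist⟩ i hi
    exact ⟨hmem i hi.le, hmem (i + 1) hi, hdist i hi⟩
  · intro hhop
    refine ⟨fun i hi => ?_, fun i hi => (hhop i hi).2.2⟩
    rcases hi.eq_or_lt with rfl | hi
    · exact hfm ▸ hp
    · exact (hhop i hi).1

theorem exists_range_of_arcs {ι : Type*} {α : ℝ} (hα : 0 < α) (P : Finset X) (s : Finset ι)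
    (source target : ι → X) :
    ∃ ρ : X → ℝ, (∀ p, 0 ≤ ρ p) ∧ (∀ i ∈ s, dist (source i) (target i) ≤ ρ (source i)) ∧
      cost α P ρ ≤ ∑ i ∈ s, dist (source i) (target i) ^ α := by
  set w : ι → ℝ := fun i => dist (source i) (target i) ^ α
  have hw (i : ι) : 0 ≤ w i := by positivity
  have hfiber (p : X) : 0 ≤ ∑ i ∈ s with source i = p, w i := sum_nonneg fun i _ => hw i
  refine ⟨fun p => (∑ i ∈ s with source i = p, w i) ^ α⁻¹,
    fun p => Real.rpow_nonneg (hfiber p) _, fun i hi => ?_, ?_⟩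
  · rw [Real.le_rpow_inv_iff_of_pos dist_nonneg (hfiber _) hα]
    exact single_le_sum (fun j _ => hw j) (mem_filter.2 ⟨hi, rfl⟩)
  · simp only [cost, Real.rpow_inv_rpow (hfiber _) hα.ne']
    exact sum_fiberwise_le_sum_of_sum_fiber_nonneg fun p _ => hfiber p

end Reachability

section Gaps

/-- The predecessor of `q` in `P`: the nearest point of `P` on the side of `q` facing the source.
The value `pre P 0 = 0` gives the source a gap of length `0`, so that it need not be excluded from
sums over `P`. -/
noncomputable def pre (P : Finset ℝ) (q : ℝ) : ℝ :=
  if 0 < q then sSup {x | x ∈ P ∧ x < q} else if q < 0 then sInf {x | x ∈ P ∧ q < x} else 0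

/-- The length of the gap between `q` and its predecessor, which is the standard range of the
latter unless it is the source. -/
noncomputable def gap (P : Finset ℝ) (q : ℝ) : ℝ :=
  dist (pre P q) q

variable {P : Finset ℝ} {p q e : ℝ}

theorem gap_nonneg : 0 ≤ gap P q :=
  dist_nonneg

theorem isGreatest_pre (hP : 0 ∈ P) (hq : 0 < q) : IsGreatest {x | x ∈ P ∧ x < q} (pre P q) := by
  rw [pre, if_pos hq]
  exact (P.finite_toSet.subset fun _ hx => hx.1).isCompact.isGreatest_sSup ⟨0, hP, hq⟩

theorem isLeast_pre (hP : 0 ∈ P) (hq : q < 0) : IsLeast {x | x ∈ P ∧ q < x} (pre P q) := by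
  rw [pre, if_neg hq.le.not_gt, if_pos hq]
  exact (P.finite_toSet.subset fun _ hx => hx.1).isCompact.isLeast_sInf ⟨0, hP, hq⟩

theorem pre_zero : pre P 0 = 0 := by
  simp [pre]

theorem pre_mem (hP : 0 ∈ P) (q : ℝ) : pre P q ∈ P := by
  rcases lt_trichotomy q 0 with hq | rfl | hq
  · exact (isLeast_pre hP hq).1.1
  · rwa [pre_zero]
  · exact (isGreatest_pre hP hq).1.1

theorem pre_mem_uIcc (hP : 0 ∈ P) (he : e ∈ P) (hq : q ∉ [[0, e]]) : pre P q ∈ [[e, q]] := by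
  rcases lt_trichotomy q 0 with h0 | rfl | h0
  · have hqe : q < e := not_le.1 fun h => hq (Set.mem_uIcc_of_ge h h0.le)
    exact Set.mem_uIcc_of_ge (isLeast_pre hP h0).1.2.le ((isLeast_pre hP h0).2 ⟨he, hqe⟩)
  · exact absurd Set.left_mem_uIcc hq
  · have heq : e < q := not_le.1 fun h => hq (Set.mem_uIcc_of_le h0.le h)
    exact Set.mem_uIcc_of_le ((isGreatest_pre hP h0).2 ⟨he, heq⟩) (isGreatest_pre hP h0).1.2.le

theorem pre_mem_uIcc_zero (hP : 0 ∈ P) (q : ℝ) : pre P q ∈ [[0, q]] := by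
  rcases eq_or_ne q 0 with rfl | hq
  · simp [pre_zero]
  · exact pre_mem_uIcc hP hP (by simpa using hq)

theorem abs_pre_lt_abs (hP : 0 ∈ P) (hq : q ≠ 0) : |pre P q| < |q| := by
  have hne : pre P q ≠ q := by
    rcases lt_or_gt_of_ne hq with h | h
    exacts [(isLeast_pre hP h).1.2.ne', (isGreatest_pre hP h).1.2.ne]
  have := pre_mem_uIcc_zero hP q
  grind [Set.mem_uIcc]

theorem notMem_uIoo_pre (hP : 0 ∈ P) (hp : p ∈ P) (q : ℝ) : p ∉ Set.uIoo (pre P q) q := by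
  rcases lt_trichotomy q 0 with hq | rfl | hq
  · rw [Set.uIoo_of_gt (isLeast_pre hP hq).1.2]
    exact fun h => h.2.not_ge ((isLeast_pre hP hq).2 ⟨hp, h.1⟩)
  · simp [pre_zero]
  · rw [Set.uIoo_of_lt (isGreatest_pre hP hq).1.2]
    exact fun h => h.1.not_ge ((isGreatest_pre hP hq).2 ⟨hp, h.2⟩)

theorem pairwiseDisjoint_uIoo_pre (hP : 0 ∈ P) :
    (P : Set ℝ).PairwiseDisjoint fun q => Set.uIoo (pre P q) q := by
  intro q hq q' hq' hne
  refine Set.disjoint_left.2 fun z hz hz' => ?_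
  have h1 := notMem_uIoo_pre hP hq q'
  have h2 := notMem_uIoo_pre hP hq' q
  have h3 := pre_mem_uIcc_zero hP q
  have h4 := pre_mem_uIcc_zero hP q'
  simp only [Set.uIoo_eq_union, Set.mem_union, Set.mem_Ioo, Set.mem_uIcc] at *
  grind

theorem pre_induction (hP : 0 ∈ P) {motive : ℝ → Prop} (zero : motive 0)
    (step : ∀ q ∈ P, q ≠ 0 → motive (pre P q) → motive q) : ∀ q ∈ P, motive q := by
  intro q hq
  have hwf : (P : Set ℝ).WellFoundedOn (Order.Preimage (fun x : ℝ => |x|) (· < ·)) :=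
    P.finite_toSet.wellFoundedOn
  refine hwf.induction hq fun q hq ih => ?_
  rcases eq_or_ne q 0 with rfl | h0
  · exact zero
  · exact step q hq h0 (ih _ (pre_mem hP q) (abs_pre_lt_abs hP h0))

theorem isLeast_suc (hp : 0 < p) (hs : HasSuc P p) : IsLeast {q | q ∈ P ∧ p < q} (suc P p) := by
  rw [suc, if_pos hp]
  exact (P.finite_toSet.subset fun _ hx => hx.1).isCompact.isLeast_sInf
    (hs.resolve_right fun h => hp.not_gt h.1).2

theorem isGreatest_suc (hp : p < 0) (hs : HasSuc P p) :
    IsGreatest {q | q ∈ P ∧ q < p} (suc P p) := by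
  rw [suc, if_neg hp.not_gt]
  exact (P.finite_toSet.subset fun _ hx => hx.1).isCompact.isGreatest_sSup
    (hs.resolve_left fun h => hp.not_gt h.1).2

theorem suc_mem (hs : HasSuc P p) : suc P p ∈ P := by
  rcases hs.imp And.left And.left with hp | hp
  exacts [(isLeast_suc hp hs).1.1, (isGreatest_suc hp hs).1.1]

theorem pre_suc (hP : 0 ∈ P) (hp : p ∈ P) (hs : HasSuc P p) : pre P (suc P p) = p := by
  rcases hs.imp And.left And.left with h0 | h0
  · have hsuc := isLeast_suc h0 hs
    refine (isGreatest_pre hP (h0.trans hsuc.1.2)).unique ⟨⟨hp, hsuc.1.2⟩, fun x hx => ?_⟩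
    exact not_lt.1 fun h => hx.2.not_ge (hsuc.2 ⟨hx.1, h⟩)
  · have hsuc := isGreatest_suc h0 hs
    refine (isLeast_pre hP (hsuc.1.2.trans h0)).unique ⟨⟨hp, hsuc.1.2⟩, fun x hx => ?_⟩
    exact not_lt.1 fun h => hx.2.not_ge (hsuc.2 ⟨hx.1, h⟩)

end Gaps

section Paths

/-- The points of `P` on the segment from the source to `t`. -/
noncomputable def path (P : Finset ℝ) (t : ℝ) : Finset ℝ :=
  {q ∈ P | q ∈ [[0, t]]}

/-- The total cost of crossing the gaps that end at the points of `Q`, each by a hop of standard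
range. -/
noncomputable def gapCost (α : ℝ) (P Q : Finset ℝ) : ℝ :=
  ∑ q ∈ Q, gap P q ^ α

variable {P Q Q' : Finset ℝ} {e c r t α : ℝ}

theorem gapCost_mono (h : Q ⊆ Q') : gapCost α P Q ≤ gapCost α P Q' :=
  sum_le_sum_of_subset_of_nonneg h fun _ _ _ => Real.rpow_nonneg gap_nonneg α

theorem gapCost_nonneg : 0 ≤ gapCost α P Q :=
  sum_nonneg fun _ _ => Real.rpow_nonneg gap_nonneg α

theorem gapCost_union_le : gapCost α P (Q ∪ Q') ≤ gapCost α P Q + gapCost α P Q' := by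
  rw [gapCost, gapCost, gapCost, ← sum_union_inter]
  exact le_add_of_nonneg_right gapCost_nonneg

theorem path_subset_path (ht : t ∈ [[0, e]]) : path P t ⊆ path P e :=
  monotone_filter_right P fun _ _ hq => Set.uIcc_subset_uIcc_left ht hq

theorem gapCost_path_zero (hα : α ≠ 0) : gapCost α P (path P 0) = 0 := by
  refine sum_eq_zero fun q hq => ?_
  obtain rfl : q = 0 := by simpa [path] using (mem_filter.1 hq).2
  rw [gap, pre_zero, dist_self, Real.zero_rpow hα]

theorem sum_gap_path_sdiff_le (hP : 0 ∈ P) (he : e ∈ P) (t : ℝ) :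
    ∑ q ∈ path P t \ path P e, gap P q ≤ dist e t := by
  refine sum_dist_le_of_pairwiseDisjoint_uIoo
    ((pairwiseDisjoint_uIoo_pre hP).subset fun q hq => ?_) fun q hq => ?_
  · exact filter_subset _ P (sdiff_subset hq)
  · obtain ⟨⟨-, hqt⟩, hqe⟩ : (q ∈ P ∧ q ∈ [[0, t]]) ∧ q ∉ [[0, e]] := by
      simp_all [path]
    have hq_mem : q ∈ [[e, t]] := (Set.uIcc_subset_uIcc_union_uIcc hqt).resolve_left hqe
    have hpre_mem : pre P q ∈ [[e, t]] :=
      Set.uIcc_subset_uIcc_left hq_mem (pre_mem_uIcc hP he hqe)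
    exact Set.uIoo_subset_uIcc_self.trans (Set.uIcc_subset_uIcc hpre_mem hq_mem)

theorem gapCost_path_sdiff_le (hα : 1 ≤ α) (hP : 0 ∈ P) (he : e ∈ P) (t : ℝ) :
    gapCost α P (path P t \ path P e) ≤ dist e t ^ α :=
  calc gapCost α P (path P t \ path P e)
      ≤ (∑ q ∈ path P t \ path P e, gap P q) ^ α :=
        sum_rpow_le_rpow_sum hα fun _ _ => gap_nonneg
    _ ≤ dist e t ^ α :=
        Real.rpow_le_rpow (sum_nonneg fun _ _ => gap_nonneg) (sum_gap_path_sdiff_le hP he t)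
          (by linarith)

theorem gapCost_le_add_of_subset (hα : 1 ≤ α) (hP : 0 ∈ P) (he : e ∈ P)
    (hQ : Q' ⊆ Q ∪ (path P t \ path P e)) :
    gapCost α P Q' ≤ gapCost α P Q + dist e t ^ α :=
  calc gapCost α P Q' ≤ gapCost α P Q + gapCost α P (path P t \ path P e) :=
        (gapCost_mono hQ).trans gapCost_union_le
    _ ≤ gapCost α P Q + dist e t ^ α := by
        gcongr
        exact gapCost_path_sdiff_le hα hP he t

/-- The points whose gaps need not be crossed separately once the hub `c` has been reached and
broadcasts with range `r`: they lie in the range of `c` and off the path to `c`. -/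
noncomputable def bypassed (P : Finset ℝ) (c r : ℝ) : Finset ℝ :=
  {q ∈ P | dist c q ≤ r} \ path P c

theorem sum_gap_bypassed_le (hP : 0 ∈ P) (hc : c ∈ P) (hr : 0 ≤ r) :
    ∑ q ∈ bypassed P c r, gap P q ≤ 2 * r := by
  have hsub : bypassed P c r ⊆ (path P (c + r) \ path P c) ∪ (path P (c - r) \ path P c) := by
    intro q hq
    simp only [bypassed, path, mem_sdiff, mem_union, mem_filter, Set.mem_uIcc,
      Real.dist_eq, abs_le] at hq ⊢
    grind
  calc ∑ q ∈ bypassed P c r, gap P q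
      ≤ ∑ q ∈ path P (c + r) \ path P c, gap P q + ∑ q ∈ path P (c - r) \ path P c, gap P q := by
        simpa [gapCost] using (gapCost_mono (α := 1) hsub).trans gapCost_union_le
    _ ≤ dist c (c + r) + dist c (c - r) :=
        add_le_add (sum_gap_path_sdiff_le hP hc _) (sum_gap_path_sdiff_le hP hc _)
    _ = 2 * r := by simp [abs_of_nonneg hr, two_mul]

end Paths

section Exploration

/-- `Explored P ρ S a b`: starting from the source, the broadcast under `ρ` can process the points
of `S` one after another, each of them lying between the extreme points `a` and `b` reached before,
so that `a` and `b` become the extreme points reached by the source and `S`. -/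
inductive Explored (P : Finset ℝ) (ρ : ℝ → ℝ) : Finset ℝ → ℝ → ℝ → Prop
  | start : Explored P ρ ∅ 0 0
  | step {S : Finset ℝ} {a b w x y : ℝ} (prev : Explored P ρ S a b) (hw : w ∈ Set.Icc a b)
      (hwS : w ∉ S) (hx : IsLeast {p | Hop P ρ w p} x) (hy : IsGreatest {p | Hop P ρ w p} y) :
      Explored P ρ (insert w S) (min a x) (max b y)

/-- The cost of connecting the points of `Q` when the hub `c` has range `dist c d` and only the gaps
it does not bypass are crossed by hops of standard range. -/
noncomputable def hubCost (α : ℝ) (P Q : Finset ℝ) (c d : ℝ) : ℝ :=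
  dist c d ^ α + gapCost α P (Q \ bypassed P c (dist c d))

variable {P S : Finset ℝ} {ρ : ℝ → ℝ} {a b c d t w x y α : ℝ}

namespace Explored

theorem subset (h : Explored P ρ S a b) : S ⊆ P := by
  induction h with
  | start => exact empty_subset P
  | step _ _ _ hx _ ih => exact insert_subset hx.1.1 ih

theorem left_mem (hP : 0 ∈ P) (h : Explored P ρ S a b) : a ∈ P := by
  induction h with
  | start => exact hP
  | step _ _ _ hx _ ih => exact min_rec' (· ∈ P) ih hx.1.2.1

theorem right_mem (hP : 0 ∈ P) (h : Explored P ρ S a b) : b ∈ P := by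
  induction h with
  | start => exact hP
  | step _ _ _ _ hy ih => exact max_rec' (· ∈ P) ih hy.1.2.1

theorem zero_mem (h : Explored P ρ S a b) : 0 ∈ Set.Icc a b := by
  induction h with
  | start => simp
  | step _ _ _ _ _ ih => exact ⟨min_le_of_left_le ih.1, le_max_of_le_left ih.2⟩

theorem mem_of_hop (h : Explored P ρ S a b) {p q : ℝ} (hp : p ∈ S) (hpq : Hop P ρ p q) :
    q ∈ Set.Icc a b := by
  induction h with
  | start => simp at hp
  | step _ _ _ hx hy ih =>
    rcases mem_insert.1 hp with rfl | hp
    · exact ⟨min_le_of_right_le (hx.2 hpq), le_max_of_le_right (hy.2 hpq)⟩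
    · exact ⟨min_le_of_left_le (ih hp).1, le_max_of_le_left (ih hp).2⟩

theorem exists_step (h : Explored P ρ S a b) (hw : w ∈ Set.Icc a b) (hwx : Hop P ρ w x)
    (hx : x ∉ Set.Icc a b) : w ∉ S ∧ ∃ a' b', Explored P ρ (insert w S) a' b' := by
  have hwS : w ∉ S := fun hw => hx (h.mem_of_hop hw hwx)
  have hcompact : IsCompact {p | Hop P ρ w p} :=
    (P.finite_toSet.subset fun p hp => hp.2.1).isCompact
  obtain ⟨y, hy⟩ := hcompact.exists_isLeast ⟨x, hwx⟩
  obtain ⟨z, hz⟩ := hcompact.exists_isGreatest ⟨x, hwx⟩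
  exact ⟨hwS, _, _, h.step hw hwS hy hz⟩

end Explored

theorem Feasible.exists_explored_covering (hρ : Feasible P 0 ρ) :
    ∃ S a b, Explored P ρ S a b ∧ ∀ p ∈ P, p ∈ Set.Icc a b := by
  have hfin : {S | ∃ a b, Explored P ρ S a b}.Finite :=
    P.powerset.finite_toSet.subset fun S ⟨_, _, h⟩ => mem_powerset.2 h.subset
  obtain ⟨S, ⟨a, b, h⟩, hmax⟩ := hfin.exists_maximal ⟨∅, 0, 0, .start⟩
  have hclosed {w x : ℝ} (hw : w ∈ Set.Icc a b) (hwx : Hop P ρ w x) : x ∈ Set.Icc a b := by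
    by_contra hx
    obtain ⟨hwS, hstep⟩ := h.exists_step hw hwx hx
    exact hwS (hmax hstep (subset_insert w S) (mem_insert_self w S))
  refine ⟨S, a, b, h, fun p hp => ?_⟩
  induction (feasible_iff_reflTransGen_hop.1 hρ).2 p hp with
  | refl => exact h.zero_mem
  | tail _ hhop ih => exact hclosed (ih hhop.1) hhop

theorem dist_min_le_dist (haw : a ≤ w) : dist a (min a x) ≤ dist w x := by
  rw [dist_comm a, dist_comm w, Real.dist_eq, Real.dist_eq]
  grind

theorem dist_max_le_dist (hwb : w ≤ b) : dist b (max b y) ≤ dist w y := by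
  rw [Real.dist_eq, Real.dist_eq]
  grind

theorem Explored.gapCost_path_endpoints_le (hα : 1 ≤ α) (hP : 0 ∈ P) (h : Explored P ρ S a b) :
    gapCost α P (path P a) ≤ cost α S ρ ∧ gapCost α P (path P b) ≤ cost α S ρ := by
  have hα0 : 0 < α := by linarith
  induction h with
  | start => simp [cost, gapCost_path_zero hα0.ne']
  | @step S a b w x y prev hw hwS hx hy ih =>
    have hnew (e t : ℝ) : path P t ⊆ path P e ∪ (path P t \ path P e) := by
      rw [union_sdiff_self_eq_union]
      exact subset_union_right
    rw [cost_insert hwS]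
    constructor
    · calc gapCost α P (path P (min a x))
          ≤ gapCost α P (path P a) + dist a (min a x) ^ α :=
            gapCost_le_add_of_subset hα hP (prev.left_mem hP) (hnew _ _)
        _ ≤ cost α S ρ + ρ w ^ α := by
            gcongr
            exacts [ih.1, (dist_min_le_dist hw.1).trans hx.1.2.2]
    · calc gapCost α P (path P (max b y))
          ≤ gapCost α P (path P b) + dist b (max b y) ^ α :=
            gapCost_le_add_of_subset hα hP (prev.right_mem hP) (hnew _ _)
        _ ≤ cost α S ρ + ρ w ^ α := by
            gcongr
            exacts [ih.2, (dist_max_le_dist hw.2).trans hy.1.2.2]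

theorem Explored.gapCost_path_le (hα : 1 ≤ α) (hP : 0 ∈ P) (h : Explored P ρ S a b)
    (ht : t ∈ Set.Icc a b) : gapCost α P (path P t) ≤ cost α S ρ := by
  obtain ⟨hleft, hright⟩ := h.gapCost_path_endpoints_le hα hP
  rcases le_total t 0 with h0 | h0
  · exact (gapCost_mono (path_subset_path (Set.mem_uIcc_of_ge ht.1 h0))).trans hleft
  · exact (gapCost_mono (path_subset_path (Set.mem_uIcc_of_le h0 ht.2))).trans hright

theorem hubCost_le_add_of_subset {Q Q' : Finset ℝ} {e : ℝ} (hα : 1 ≤ α) (hP : 0 ∈ P) (he : e ∈ P)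
    (hQ : Q' ⊆ Q ∪ (path P t \ path P e)) :
    hubCost α P Q' c d ≤ hubCost α P Q c d + dist e t ^ α := by
  have hsub : Q' \ bypassed P c (dist c d) ⊆
      (Q \ bypassed P c (dist c d)) ∪ (path P t \ path P e) := by
    grind
  rw [hubCost, hubCost, add_assoc]
  gcongr
  exact gapCost_le_add_of_subset hα hP he hsub

theorem hubCost_le_of_forall_dist_le {Q : Finset ℝ} (hQ : Q ⊆ P)
    (hd : ∀ q ∈ Q, dist c q ≤ dist c d) :
    hubCost α P Q c d ≤ gapCost α P (path P c) + dist c d ^ α := by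
  rw [hubCost, add_comm]
  gcongr
  refine gapCost_mono fun q hq => ?_
  simp only [bypassed, mem_sdiff, mem_filter, not_and, not_not] at hq
  exact hq.2 ⟨hQ hq.1, hd q hq.1⟩

theorem Explored.exists_hubCost_le_of_two_sided (hα : 1 ≤ α) (hP : 0 ∈ P)
    (prev : Explored P ρ S a b) (hw : w ∈ Set.Icc a b) (hx : Hop P ρ w x) (hy : Hop P ρ w y)
    (hxa : x < a) (hby : b < y) :
    ∃ c ∈ P, ∃ d ∈ P, hubCost α P {q ∈ P | q ∈ Set.Icc x y} c d ≤ cost α S ρ + ρ w ^ α := by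
  obtain ⟨d, hwd, hxd, hyd⟩ : ∃ d, Hop P ρ w d ∧ dist w x ≤ dist w d ∧ dist w y ≤ dist w d := by
    rcases le_total (dist w x) (dist w y) with h | h
    exacts [⟨y, hy, h, le_rfl⟩, ⟨x, hx, le_rfl, h⟩]
  have hfar (q : ℝ) (hq : q ∈ Set.Icc x y) : dist w q ≤ dist w d := by
    rw [Real.dist_eq] at *
    grind
  refine ⟨w, hx.1, d, hwd.2.1, ?_⟩
  calc hubCost α P {q ∈ P | q ∈ Set.Icc x y} w d
      ≤ gapCost α P (path P w) + dist w d ^ α :=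
        hubCost_le_of_forall_dist_le (filter_subset _ _) fun q hq => hfar q (mem_filter.1 hq).2
    _ ≤ cost α S ρ + ρ w ^ α := by
        gcongr
        exacts [prev.gapCost_path_le hα hP hw, hwd.2.2]

theorem Explored.exists_hubCost_le (hα : 1 ≤ α) (hP : 0 ∈ P) (h : Explored P ρ S a b) :
    ∃ c ∈ P, ∃ d ∈ P, hubCost α P {q ∈ P | q ∈ Set.Icc a b} c d ≤ cost α S ρ := by
  have hα0 : 0 < α := by linarith
  induction h with
  | start =>
    refine ⟨0, hP, 0, hP, (hubCost_le_of_forall_dist_le (filter_subset _ _) (by simp)).trans ?_⟩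
    simp [cost, gapCost_path_zero hα0.ne', Real.zero_rpow hα0.ne']
  | @step S a b w x y prev hw hwS hx hy ih =>
    have hzero := prev.zero_mem
    rw [cost_insert hwS]
    obtain ⟨c, hc, d, hd, ih⟩ := ih
    rcases le_or_gt a x with hax | hxa
    · refine ⟨c, hc, d, hd, ?_⟩
      calc hubCost α P {q ∈ P | q ∈ Set.Icc (min a x) (max b y)} c d
          ≤ hubCost α P {q ∈ P | q ∈ Set.Icc a b} c d + dist b (max b y) ^ α := by
            refine hubCost_le_add_of_subset hα hP (prev.right_mem hP) fun q hq => ?_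
            simp only [path, mem_union, mem_sdiff, mem_filter, Set.mem_uIcc, Set.mem_Icc] at *
            grind
        _ ≤ cost α S ρ + ρ w ^ α := by
            gcongr
            exact (dist_max_le_dist hw.2).trans hy.1.2.2
    rcases le_or_gt y b with hyb | hby
    · refine ⟨c, hc, d, hd, ?_⟩
      calc hubCost α P {q ∈ P | q ∈ Set.Icc (min a x) (max b y)} c d
          ≤ hubCost α P {q ∈ P | q ∈ Set.Icc a b} c d + dist a (min a x) ^ α := by
            refine hubCost_le_add_of_subset hα hP (prev.left_mem hP) fun q hq => ?_
            simp only [path, mem_union, mem_sdiff, mem_filter, Set.mem_uIcc, Set.mem_Icc] at *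
            grind
        _ ≤ cost α S ρ + ρ w ^ α := by
            gcongr
            exact (dist_min_le_dist hw.1).trans hx.1.2.2
    · rw [min_eq_right hxa.le, max_eq_right hby.le]
      exact prev.exists_hubCost_le_of_two_sided hα hP hw hx.1 hy.1 hxa hby

theorem Feasible.exists_hubCost_le (hα : 1 ≤ α) (hP : 0 ∈ P) (hρ : Feasible P 0 ρ) :
    ∃ c ∈ P, ∃ d ∈ P, hubCost α P P c d ≤ cost α P ρ := by
  obtain ⟨S, a, b, h, hcover⟩ := hρ.exists_explored_covering
  obtain ⟨c, hc, d, hd, hle⟩ := h.exists_hubCost_le hα hP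
  rw [filter_true_of_mem hcover] at hle
  refine ⟨c, hc, d, hd, hle.trans ?_⟩
  exact sum_le_sum_of_subset_of_nonneg h.subset fun p hp _ => Real.rpow_nonneg (hρ.1 p hp) α

end Exploration

section CanonicalAssignment

variable {P K : Finset ℝ} {α c d : ℝ}

theorem reflTransGen_hop_of_subset_bypassed {ρ : ℝ → ℝ} (hP : 0 ∈ P) (hc : c ∈ P)
    (hK : K ⊆ bypassed P c (dist c d)) (hcd : dist c d ≤ ρ c)
    (hgap : ∀ q ∈ P \ K, gap P q ≤ ρ (pre P q)) :
    ∀ q ∈ P, Relation.ReflTransGen (Hop P ρ) 0 q := by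
  have hop_pre {q : ℝ} (hq : q ∈ P) (hqK : q ∉ K) : Hop P ρ (pre P q) q :=
    ⟨pre_mem hP q, hq, hgap q (mem_sdiff.2 ⟨hq, hqK⟩)⟩
  have reach_path : ∀ q ∈ P, q ∈ path P c → Relation.ReflTransGen (Hop P ρ) 0 q := by
    refine pre_induction hP (fun _ => .refl) fun q hq _ ih hqc => ?_
    have hqK : q ∉ K := fun h => (mem_sdiff.1 (hK h)).2 hqc
    have hpre : pre P q ∈ path P c := path_subset_path (mem_filter.1 hqc).2
      (mem_filter.2 ⟨pre_mem hP q, pre_mem_uIcc_zero hP q⟩)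
    exact (ih hpre).tail (hop_pre hq hqK)
  have reach_hub : Relation.ReflTransGen (Hop P ρ) 0 c :=
    reach_path c hc (mem_filter.2 ⟨hc, Set.right_mem_uIcc⟩)
  refine pre_induction hP .refl fun q hq _ ih => ?_
  by_cases hqK : q ∈ K
  · have hcq : dist c q ≤ dist c d := (mem_filter.1 (mem_sdiff.1 (hK hqK)).1).2
    exact reach_hub.tail ⟨hc, hq, hcq.trans hcd⟩
  · exact ih.tail (hop_pre hq hqK)

theorem exists_feasible_of_subset_bypassed (hα : 0 < α) (hP : 0 ∈ P) (hc : c ∈ P)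
    (hK : K ⊆ bypassed P c (dist c d)) :
    ∃ ρ : ℝ → ℝ, Feasible P 0 ρ ∧ cost α P ρ ≤ dist c d ^ α + gapCost α P (P \ K) ∧
      ∀ q ∈ P \ K, gap P q ≤ ρ (pre P q) := by
  obtain ⟨ρ, hnonneg, harcs, hcost⟩ := exists_range_of_arcs hα P (insertNone (P \ K))
    (fun q => q.elim c (pre P)) (fun q => q.elim d id)
  have hcd : dist c d ≤ ρ c := harcs none (by simp)
  have hgap (q : ℝ) (hq : q ∈ P \ K) : gap P q ≤ ρ (pre P q) :=
    harcs (some q) (by simpa using hq)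
  refine ⟨ρ, feasible_iff_reflTransGen_hop.2 ⟨fun p _ => hnonneg p, ?_⟩, ?_, hgap⟩
  · exact reflTransGen_hop_of_subset_bypassed hP hc hK hcd hgap
  · simpa [gapCost, gap] using hcost

theorem exists_hubCost_le_opt (hα : 1 ≤ α) (hP : 0 ∈ P) :
    ∃ c ∈ P, ∃ d ∈ P, hubCost α P P c d ≤ opt α P 0 := by
  obtain ⟨⟨c, d⟩, hcd, hmin⟩ := (P ×ˢ P).exists_min_image (fun x => hubCost α P P x.1 x.2)
    ⟨(0, 0), mk_mem_product hP hP⟩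
  obtain ⟨hc, hd⟩ := mem_product.1 hcd
  obtain ⟨ρ₀, hρ₀, -⟩ := exists_feasible_of_subset_bypassed (d := 0) (by linarith : 0 < α) hP hP
    (empty_subset _)
  refine ⟨c, hc, d, hd, le_csInf ⟨_, ρ₀, hρ₀, rfl⟩ ?_⟩
  rintro _ ⟨ρ, hρ, rfl⟩
  obtain ⟨c', hc', d', hd', hle⟩ := hρ.exists_hubCost_le hα hP
  exact (hmin (c', d') (mk_mem_product hc' hd')).trans hle

theorem exists_subset_bypassed_card_le {k : ℕ} (hα : 1 ≤ α) (hP : 0 ∈ P) (hc : c ∈ P)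
    (hk : 0 < k) (d : ℝ) :
    ∃ K ⊆ bypassed P c (dist c d), #K ≤ k ∧ dist c d ^ α + gapCost α P (P \ K) ≤
      (1 + 2 ^ α / (k : ℝ) ^ (α - 1)) * hubCost α P P c d := by
  obtain ⟨K, hK, hcard, hsum⟩ := exists_subset_card_le_sum_sdiff_rpow_le hα hk
    (fun _ _ => gap_nonneg) (sum_gap_bypassed_le hP hc (dist_nonneg (y := d)))
  refine ⟨K, hK, hcard, ?_⟩
  set Z := bypassed P c (dist c d)
  calc dist c d ^ α + gapCost α P (P \ K)
      ≤ dist c d ^ α + (gapCost α P (P \ Z) + gapCost α P (Z \ K)) := by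
        gcongr
        exact (gapCost_mono (by grind)).trans gapCost_union_le
    _ ≤ hubCost α P P c d + (2 * dist c d) ^ α / (k : ℝ) ^ (α - 1) := by
        rw [hubCost, ← add_assoc]
        gcongr
        exact hsum
    _ = hubCost α P P c d + 2 ^ α / (k : ℝ) ^ (α - 1) * dist c d ^ α := by
        rw [Real.mul_rpow zero_le_two dist_nonneg, mul_div_right_comm]
    _ ≤ hubCost α P P c d + 2 ^ α / (k : ℝ) ^ (α - 1) * hubCost α P P c d := by
        gcongr
        exact le_add_of_nonneg_right gapCost_nonneg
    _ = (1 + 2 ^ α / (k : ℝ) ^ (α - 1)) * hubCost α P P c d := by ring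

theorem ncard_lt_standard_range_le {ρ : ℝ → ℝ} (hP : 0 ∈ P)
    (hgap : ∀ q ∈ P \ K, gap P q ≤ ρ (pre P q)) :
    {p ∈ (P : Set ℝ) | p ≠ 0 ∧ HasSuc P p ∧ ρ p < |suc P p - p|}.ncard ≤ #K := by
  have hsub : {p ∈ (P : Set ℝ) | p ≠ 0 ∧ HasSuc P p ∧ ρ p < |suc P p - p|} ⊆
      (K.image (pre P) : Set ℝ) := by
    rintro p ⟨hp, -, hs, hlt⟩
    have hpre := pre_suc hP hp hs
    refine mem_coe.2 (mem_image.2 ⟨suc P p, ?_, hpre⟩)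
    by_contra hK
    have hle := hgap (suc P p) (mem_sdiff.2 ⟨suc_mem hs, hK⟩)
    rw [gap, hpre, dist_comm, Real.dist_eq] at hle
    exact hlt.not_ge hle
  calc _ ≤ (K.image (pre P) : Set ℝ).ncard := Set.ncard_le_ncard hsub (finite_toSet _)
    _ = #(K.image (pre P)) := Set.ncard_coe_finset _
    _ ≤ #K := card_image_le

end CanonicalAssignment

/-- The canonical range assignment: for every finite `P ⊂ ℝ` containing the
source 0 and every `k ≥ 1` there is a feasible assignment of cost at most
`(1 + 2^α/k^{α-1})·opt` in which at most `k` non-source points with a successor are assigned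
less than their standard range. -/
theorem canonical_assignment_cost (α : ℝ) (hα : 1 < α)
    (P : Finset ℝ) (hP : (0:ℝ) ∈ P) (k : ℕ) (hk : 1 ≤ k) :
    ∃ ρ : ℝ → ℝ, Feasible P 0 ρ ∧
      cost α P ρ ≤ (1 + 2 ^ α / (k : ℝ) ^ (α - 1)) * opt α P 0 ∧
      {p ∈ (P : Set ℝ) | p ≠ 0 ∧ HasSuc P p ∧ ρ p < |suc P p - p|}.ncard ≤ k := by
  obtain ⟨c, hc, d, -, hopt⟩ := exists_hubCost_le_opt hα.le hP
  obtain ⟨K, hK, hcard, hKcost⟩ := exists_subset_bypassed_card_le hα.le hP hc hk d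
  obtain ⟨ρ, hρ, hcost, hgap⟩ := exists_feasible_of_subset_bypassed (zero_lt_one.trans hα) hP hc hK
  refine ⟨ρ, hρ, ?_, (ncard_lt_standard_range_le hP hgap).trans hcard⟩
  calc cost α P ρ ≤ dist c d ^ α + gapCost α P (P \ K) := hcost
    _ ≤ (1 + 2 ^ α / (k : ℝ) ^ (α - 1)) * hubCost α P P c d := hKcost
    _ ≤ (1 + 2 ^ α / (k : ℝ) ^ (α - 1)) * opt α P 0 := by gcongr
end
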